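/- Let ν be the unique probability measure on LO_0 invariant for the process seen from the front (i.e. Q_t ν = ν for all t ≥ 0, where Q_t π is the pushforward under θ of ∫ P_t(ω,·) dπ(ω)), and set v = p·ν({η : η_1 = 0}) − q. Then for every ω ∈ LO_0 and every ε > 0: P_t(ω, {η ∈ LO : |X(η)/t − v| > ε}) → 0 as t → ∞. (Law of large numbers for the front: X(ω(t))/t → v in P_ω-probability.) -/

import Mathlib

open MeasureTheory ProbabilityTheory Filter Topology

noncomputable section

/-- The configuration space of the East model on `ℤ`: `0` ↔ `false` (empty), `1` ↔ `true`. -/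
abbrev Config : Type := ℤ → Bool

/-- The configuration `ω` flipped at site `x`. -/
def flipAt (ω : Config) (x : ℤ) : Config := fun y => if y = x then !ω x else ω y

/-- `f` depends only on the coordinates in `S`. -/
def DependsOnF (f : Config → ℝ) (S : Set ℤ) : Prop :=
  ∀ ω ω' : Config, (∀ x ∈ S, ω x = ω' x) → f ω = f ω'

/-- The set `A` depends only on the coordinates in `S`. -/
def DependsOnSet (A : Set Config) (S : Set ℤ) : Prop :=
  ∀ ω ω' : Config, (∀ x ∈ S, ω x = ω' x) → (ω ∈ A ↔ ω' ∈ A)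

/-- A cylinder (local) function: depends on finitely many coordinates. -/
def IsCylinder (f : Config → ℝ) : Prop := ∃ S : Finset ℤ, DependsOnF f ↑S

/-- The East generator at density `p` of ones. -/
def eastGen (p : ℝ) (f : Config → ℝ) (ω : Config) : ℝ :=
  ∑' x : ℤ, (if ω (x + 1) = false then (1 : ℝ) else 0) *
    (if ω x = false then p else 1 - p) * (f (flipAt ω x) - f ω)

/-- Spatial translation: `(shift y ω) x = ω (x + y)`. -/
def shift (y : ℤ) (ω : Config) : Config := fun x => ω (x + y)

/-- Left-occupied configurations: identically `1` on a left half-line, with an empty site. -/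
def LO : Set Config := {ω | (∃ y : ℤ, ∀ x < y, ω x = true) ∧ ∃ x, ω x = false}

/-- The front: position of the left-most zero. -/
def front (ω : Config) : ℤ := sInf {x : ℤ | ω x = false}

/-- Left-occupied configurations with front at the origin. -/
def LO₀ : Set Config := {ω ∈ LO | front ω = 0}

/-- The configuration seen at distance `L` behind the front. -/
def θL (L : ℤ) (ω : Config) : Config := fun x =>
  if x < 0 then true else if x = 0 then false else ω (front ω + L + x)

/-- `f` averaged over the coordinate at site `1` w.r.t. Bernoulli(p). -/
def avg1 (p : ℝ) (f : Config → ℝ) (ω : Config) : ℝ :=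
  p * f (Function.update ω 1 true) + (1 - p) * f (Function.update ω 1 false)

/-- The East process on `ℤ` at density `p`, together with its equilibrium measure. -/
structure EastProcess where
  /-- equilibrium density of ones -/
  p : ℝ
  hp0 : 0 < p
  hp1 : p < 1
  /-- the Markov semigroup -/
  P : ℝ → Kernel Config Config
  markov : ∀ t : ℝ, IsMarkovKernel (P t)
  P0 : P 0 = Kernel.id
  semigroup : ∀ s t : ℝ, 0 ≤ s → 0 ≤ t → P (t + s) = (P s).comp (P t)
  feller : ∀ t : ℝ, 0 ≤ t → ∀ f : Config → ℝ, Continuous f →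
    Continuous fun ω : Config => ∫ η, f η ∂(P t ω)
  timeCont : ∀ f : Config → ℝ, Continuous f → ∀ ω : Config,
    Continuous fun t : ℝ => ∫ η, f η ∂(P t ω)
  shiftComm : ∀ t : ℝ, 0 ≤ t → ∀ y : ℤ, ∀ ω : Config,
    P t (shift y ω) = Measure.map (shift y) (P t ω)
  generator : ∀ f : Config → ℝ, IsCylinder f → ∀ ω : Config,
    HasDerivWithinAt (fun u : ℝ => ∫ η, f η ∂(P u ω)) (eastGen p f ω) (Set.Ici 0) 0
  /-- the product Bernoulli(p) measure -/
  μ : Measure Config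
  μprob : IsProbabilityMeasure μ
  μprod : ∀ (S : Finset ℤ) (σ : ℤ → Bool),
    μ {ω : Config | ∀ x ∈ S, ω x = σ x} = ∏ x ∈ S, ENNReal.ofReal (if σ x then p else 1 - p)
  /-- LO is stable for the dynamics -/
  loStable : ∀ t : ℝ, 0 ≤ t → ∀ ω ∈ LO, P t ω LO = 1

/-- The set of Rayleigh quotients defining the spectral gap. -/
def gapSet (E : EastProcess) : Set ℝ :=
  {r | ∃ f : Config → ℝ, IsCylinder f ∧ 0 < variance f E.μ ∧
    r = (-∫ ω, f ω * eastGen E.p f ω ∂E.μ) / variance f E.μ}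

/-- The spectral gap of the East process. -/
def gap (E : EastProcess) : ℝ := sInf (gapSet E)

/-- The product measure `μ̃`: all ones on the negative half-line, a zero at the origin,
Bernoulli(p) on the positive half-line. -/
def IsMuTilde (p : ℝ) (μt : Measure Config) : Prop :=
  IsProbabilityMeasure μt ∧
  ∀ (S : Finset ℤ) (σ : ℤ → Bool),
    μt {ω : Config | ∀ x ∈ S, ω x = σ x} =
      ∏ x ∈ S, ENNReal.ofReal
        (if x < 0 then (if σ x then 1 else 0)
         else if x = 0 then (if σ x then 0 else 1)
         else (if σ x then p else 1 - p))

/-- The law at time `t` of the process seen from the front started from `π`. -/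
def Qt (E : EastProcess) (t : ℝ) (π : Measure Config) : Measure Config :=
  Measure.map (θL 0) (π.bind fun ω => E.P t ω)

/-!
Seen from the front, the East process is a Feller semigroup on the compact space `LO₀`, and the
front itself is an additive functional of it, with drift `p 1{η₁ = 0} - q`. By compactness every
limit of the time averages of the laws seen from the front is invariant, so that uniqueness of `ν`
makes the mean displacement of the front during a time `T` equal to `v T + o(T)`, *uniformly* in the
starting configuration. By the Markov property the moment generating function of the displacement,
taken in the worst case over the starting configuration, is submultiplicative in time; its second
order expansion over one block of length `T` gives exponential concentration around `v t`.
-/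

/-! ### Feller semigroups on a compact space -/

open scoped NNReal

lemma setIntegral_Ioi_comp_add_right {F : Type*} [NormedAddCommGroup F] [NormedSpace ℝ F]
    (g : ℝ → F) (a b : ℝ) : ∫ s in Set.Ioi a, g (s + b) = ∫ s in Set.Ioi (a + b), g s := by
  simpa using (measurePreserving_add_right volume b).setIntegral_preimage_emb
    (measurableEmbedding_addRight b) g (Set.Ioi (a + b))

/-- A Feller semigroup on a compact space `X`: a Markov semigroup which preserves continuous
functions and is weakly continuous in time. -/
structure FellerSemigroup (X : Type*) [TopologicalSpace X] [MeasurableSpace X] where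
  kernel : ℝ≥0 → Kernel X X
  isMarkovKernel : ∀ t, IsMarkovKernel (kernel t)
  kernel_zero : kernel 0 = Kernel.id
  kernel_add : ∀ s t, kernel (s + t) = kernel t ∘ₖ kernel s
  continuous_integral : ∀ t (f : C(X, ℝ)), Continuous fun x => ∫ y, f y ∂kernel t x
  continuous_time : ∀ (f : C(X, ℝ)) x, Continuous fun t => ∫ y, f y ∂kernel t x

namespace FellerSemigroup

variable {X : Type*} [TopologicalSpace X] [CompactSpace X] [MeasurableSpace X]
  [OpensMeasurableSpace X] (P : FellerSemigroup X)

instance (t : ℝ≥0) : IsMarkovKernel (P.kernel t) := P.isMarkovKernel t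

lemma integrable_continuousMap (f : C(X, ℝ)) (μ : Measure X)
    [IsFiniteMeasure μ] : Integrable f μ :=
  .of_bound f.continuous.aestronglyMeasurable ‖f‖ (.of_forall f.norm_coe_le_norm)

/-- The operator `P_t` on continuous functions. It is extended by `P_t = id` to `t < 0`, so that
`t ↦ P_t f` can be integrated over intervals of the real line. -/
def act (t : ℝ) : C(X, ℝ) →ₗ[ℝ] C(X, ℝ) where
  toFun f := ⟨fun x => ∫ y, f y ∂P.kernel t.toNNReal x, P.continuous_integral _ f⟩
  map_add' f g := ContinuousMap.ext fun _ =>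
    integral_add (integrable_continuousMap f _) (integrable_continuousMap g _)
  map_smul' c f := ContinuousMap.ext fun _ => integral_const_mul c f

lemma act_apply (t : ℝ) (f : C(X, ℝ)) (x : X) :
    P.act t f x = ∫ y, f y ∂P.kernel t.toNNReal x := rfl

lemma act_zero (f : C(X, ℝ)) : P.act 0 f = f := by
  ext x
  simpa [act_apply, P.kernel_zero, Kernel.id_apply] using
    integral_dirac' f x f.continuous.stronglyMeasurable

lemma act_add {s t : ℝ} (hs : 0 ≤ s) (ht : 0 ≤ t) (f : C(X, ℝ)) :
    P.act (s + t) f = P.act s (P.act t f) := by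
  ext x
  rw [act_apply, Real.toNNReal_add hs ht, P.kernel_add,
    Kernel.integral_comp (integrable_continuousMap f _)]
  rfl

lemma act_mono (t : ℝ) {f g : C(X, ℝ)} (h : f ≤ g) : P.act t f ≤ P.act t g := fun _ =>
  integral_mono (integrable_continuousMap f _) (integrable_continuousMap g _) h

lemma act_le_of_le (t : ℝ) {f : C(X, ℝ)} {c : ℝ} (h : ∀ x, f x ≤ c) (x : X) :
    P.act t f x ≤ c := by
  simpa [act_apply] using P.act_mono t (g := .const X c) h x

lemma norm_act_apply_le (t : ℝ) (f : C(X, ℝ)) (x : X) : ‖P.act t f x‖ ≤ ‖f‖ := by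
  simpa [act_apply] using norm_integral_le_of_norm_le_const (μ := P.kernel t.toNNReal x)
    (.of_forall f.norm_coe_le_norm)

@[fun_prop]
lemma continuous_act_apply (f : C(X, ℝ)) (x : X) : Continuous fun t => P.act t f x :=
  (P.continuous_time f x).comp continuous_real_toNNReal

lemma stronglyMeasurable_act (f : C(X, ℝ)) :
    StronglyMeasurable fun z : X × ℝ => P.act z.2 f z.1 :=
  (stronglyMeasurable_uncurry_of_continuous_of_stronglyMeasurable
    (fun x => P.continuous_act_apply f x)
    fun t => (P.act t f).continuous.stronglyMeasurable).comp_measurable measurable_swap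

lemma norm_exp_mul_act_le (l s : ℝ) (f : C(X, ℝ)) (x : X) :
    ‖Real.exp (-l * s) * P.act s f x‖ ≤ Real.exp (-l * s) * ‖f‖ := by
  rw [norm_mul, Real.norm_eq_abs, Real.abs_exp]
  gcongr
  exact P.norm_act_apply_le s f x

lemma integrableOn_exp_mul_act {l : ℝ} (hl : 0 < l) (f : C(X, ℝ)) (x : X) (a : ℝ) :
    IntegrableOn (fun s => Real.exp (-l * s) * P.act s f x) (Set.Ioi a) :=
  .mono' ((exp_neg_integrableOn_Ioi a hl).mul_const ‖f‖)
    (by fun_prop : Continuous _).aestronglyMeasurable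
    (.of_forall fun s => P.norm_exp_mul_act_le l s f x)

section Generator

/-- `f` is in the domain of the (pointwise) generator of `P`, with image `g`. -/
def HasGenerator (f g : C(X, ℝ)) : Prop :=
  ∀ x, HasDerivWithinAt (fun t => P.act t f x) (g x) (Set.Ici 0) 0

variable {P}

lemma HasGenerator.sub {f₁ g₁ f₂ g₂ : C(X, ℝ)} (h₁ : P.HasGenerator f₁ g₁)
    (h₂ : P.HasGenerator f₂ g₂) : P.HasGenerator (f₁ - f₂) (g₁ - g₂) := fun x => by
  simpa using! (h₁ x).sub (h₂ x)

lemma HasGenerator.neg {f g : C(X, ℝ)} (h : P.HasGenerator f g) : P.HasGenerator (-f) (-g) :=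
  fun x => by simpa using! (h x).neg

lemma HasGenerator.nonpos_of_isMax {f g : C(X, ℝ)} (h : P.HasGenerator f g) {x : X}
    (hx : ∀ y, f y ≤ f x) : g x ≤ 0 := by
  refine le_of_tendsto ((hasDerivWithinAt_iff_tendsto_slope' Set.self_notMem_Ioi).1
    (hasDerivWithinAt_Ioi_iff_Ici.2 (h x))) ?_
  filter_upwards [self_mem_nhdsWithin] with t ht
  rw [slope_def_field, act_zero, sub_zero]
  exact div_nonpos_of_nonpos_of_nonneg (sub_nonpos.2 (P.act_le_of_le t hx x))
    (Set.mem_Ioi.1 ht).le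

lemma HasGenerator.nonpos {w : C(X, ℝ)} {l : ℝ} (hl : 0 < l) (h : P.HasGenerator w (l • w)) :
    w ≤ 0 := fun x => by
  obtain ⟨y, -, hy⟩ := isCompact_univ.exists_isMaxOn ⟨x, Set.mem_univ x⟩ w.continuous.continuousOn
  have hmax : ∀ z, w z ≤ w y := fun z => hy (Set.mem_univ z)
  exact (hmax x).trans (nonpos_of_mul_nonpos_right (h.nonpos_of_isMax hmax) hl)

lemma HasGenerator.eq_zero {w : C(X, ℝ)} {l : ℝ} (hl : 0 < l) (h : P.HasGenerator w (l • w)) :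
    w = 0 :=
  le_antisymm (h.nonpos hl) (neg_nonpos.1 (HasGenerator.nonpos hl (by simpa using h.neg)))

end Generator

section Resolvent

variable [FirstCountableTopology X] {l : ℝ}

/-- The resolvent `∫₀^∞ e^{-ls} P_s f ds` of the semigroup at `l > 0`. -/
def resolvent (hl : 0 < l) (f : C(X, ℝ)) : C(X, ℝ) where
  toFun x := ∫ s in Set.Ioi (0 : ℝ), Real.exp (-l * s) * P.act s f x
  continuous_toFun := continuous_of_dominated
    (fun x => (P.integrableOn_exp_mul_act hl f x 0).aestronglyMeasurable)
    (fun x => .of_forall fun s => P.norm_exp_mul_act_le l s f x)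
    ((exp_neg_integrableOn_Ioi 0 hl).mul_const ‖f‖)
    (.of_forall fun s => continuous_const.mul (P.act s f).continuous)

lemma resolvent_apply (hl : 0 < l) (f : C(X, ℝ)) (x : X) :
    P.resolvent hl f x = ∫ s in Set.Ioi (0 : ℝ), Real.exp (-l * s) * P.act s f x := rfl

lemma act_resolvent_apply_eq_integral (hl : 0 < l) (f : C(X, ℝ)) {t : ℝ} (ht : 0 ≤ t) (x : X) :
    P.act t (P.resolvent hl f) x =
      ∫ s in Set.Ioi (0 : ℝ), Real.exp (-l * s) * P.act (s + t) f x := by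
  have hint : Integrable (fun z : X × ℝ => Real.exp (-l * z.2) * P.act z.2 f z.1)
      ((P.kernel t.toNNReal x).prod (volume.restrict (Set.Ioi 0))) :=
    .mono' (((exp_neg_integrableOn_Ioi 0 hl).mul_const ‖f‖).comp_snd _)
      ((by fun_prop : Continuous fun z : X × ℝ => Real.exp (-l * z.2)).stronglyMeasurable.mul
        (P.stronglyMeasurable_act f)).aestronglyMeasurable
      (.of_forall fun z => P.norm_exp_mul_act_le l z.2 f z.1)
  calc P.act t (P.resolvent hl f) x
      = ∫ s in Set.Ioi (0 : ℝ), ∫ y, Real.exp (-l * s) * P.act s f y ∂P.kernel t.toNNReal x :=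
        integral_integral_swap hint
    _ = ∫ s in Set.Ioi (0 : ℝ), Real.exp (-l * s) * P.act (s + t) f x := by
        refine setIntegral_congr_fun measurableSet_Ioi fun s hs => ?_
        rw [integral_const_mul, add_comm s t, P.act_add ht (Set.mem_Ioi.1 hs).le]
        rfl

lemma act_resolvent_apply (hl : 0 < l) (f : C(X, ℝ)) {t : ℝ} (ht : 0 ≤ t) (x : X) :
    P.act t (P.resolvent hl f) x = Real.exp (l * t) *
      (P.resolvent hl f x - ∫ s in (0 : ℝ)..t, Real.exp (-l * s) * P.act s f x) := by
  have hsplit := intervalIntegral.integral_interval_add_Ioi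
    (P.integrableOn_exp_mul_act hl f x 0) (P.integrableOn_exp_mul_act hl f x t)
  rw [P.act_resolvent_apply_eq_integral hl f ht, resolvent_apply, ← hsplit, add_sub_cancel_left,
    ← zero_add t, ← setIntegral_Ioi_comp_add_right, zero_add, ← integral_const_mul]
  refine setIntegral_congr_fun measurableSet_Ioi fun s _ => ?_
  rw [← mul_assoc, ← Real.exp_add]
  ring_nf

lemma hasGenerator_resolvent (hl : 0 < l) (f : C(X, ℝ)) :
    P.HasGenerator (P.resolvent hl f) (l • P.resolvent hl f - f) := fun x => by
  have hcont : Continuous fun s => Real.exp (-l * s) * P.act s f x := by fun_prop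
  have hint : HasDerivAt (fun t => ∫ s in (0 : ℝ)..t, Real.exp (-l * s) * P.act s f x) (f x) 0 := by
    simpa [act_zero] using hcont.integral_hasStrictDerivAt 0 0 |>.hasDerivAt
  have hexp : HasDerivAt (fun t => Real.exp (l * t)) l 0 := by
    simpa using ((hasDerivAt_id (0 : ℝ)).const_mul l).exp
  have hprod := hexp.mul (hint.const_sub (P.resolvent hl f x))
  refine (hprod.hasDerivWithinAt.congr_of_mem (fun t ht => P.act_resolvent_apply hl f ht x)
    Set.self_mem_Ici).congr_deriv ?_
  simp [sub_eq_add_neg]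

lemma HasGenerator.resolvent_eq {P : FellerSemigroup X} {f g : C(X, ℝ)} (h : P.HasGenerator f g)
    (hl : 0 < l) : P.resolvent hl (l • f - g) = f := by
  refine sub_eq_zero.1 (HasGenerator.eq_zero (P := P) hl ?_)
  convert (P.hasGenerator_resolvent hl (l • f - g)).sub h using 1
  module

end Resolvent

variable [FirstCountableTopology X] {P}

lemma HasGenerator.exp_mul_act_apply {f g : C(X, ℝ)} (h : P.HasGenerator f g) {l : ℝ} (hl : 0 < l)
    {t : ℝ} (ht : 0 ≤ t) (x : X) :
    Real.exp (-l * t) * P.act t f x =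
      f x - ∫ s in (0 : ℝ)..t, Real.exp (-l * s) * P.act s (l • f - g) x := by
  have key := P.act_resolvent_apply hl (l • f - g) ht x
  rw [h.resolvent_eq hl] at key
  rw [key, ← mul_assoc, ← Real.exp_add]
  simp

/-- **Dynkin's formula**. -/
theorem HasGenerator.act_apply {f g : C(X, ℝ)} (h : P.HasGenerator f g) {t : ℝ} (ht : 0 ≤ t)
    (x : X) : P.act t f x = f x + ∫ s in (0 : ℝ)..t, P.act s g x := by
  have heq : Set.EqOn (fun l : ℝ => Real.exp (-l * t) * P.act t f x)
      (fun l => f x - ∫ s in (0 : ℝ)..t, Real.exp (-l * s) * P.act s (l • f - g) x)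
      (Set.Ioi 0) := fun l hl => h.exp_mul_act_apply hl ht x
  have hcont : Continuous fun l : ℝ =>
      ∫ s in (0 : ℝ)..t, Real.exp (-l * s) * P.act s (l • f - g) x := by
    refine intervalIntegral.continuous_parametric_intervalIntegral_of_continuous' ?_ _ _
    simp only [map_sub, map_smul, ContinuousMap.sub_apply, ContinuousMap.smul_apply,
      Function.uncurry_def]
    fun_prop
  -- The weighted formula holds for `l > 0`; let `l → 0`.
  have hclosure := heq.closure (by fun_prop) (continuous_const.sub hcont)
  rw [closure_Ioi] at hclosure
  simpa using hclosure (Set.self_mem_Ici (a := (0 : ℝ)))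

/-- **Grönwall's inequality**. -/
theorem HasGenerator.act_apply_le {f g : C(X, ℝ)} (h : P.HasGenerator f g) {l : ℝ} (hl : 0 < l)
    (hfg : g ≤ l • f) {t : ℝ} (ht : 0 ≤ t) (x : X) : P.act t f x ≤ Real.exp (l * t) * f x := by
  have hpos : 0 ≤ ∫ s in (0 : ℝ)..t, Real.exp (-l * s) * P.act s (l • f - g) x :=
    intervalIntegral.integral_nonneg ht fun s _ => mul_nonneg (Real.exp_nonneg _) (by
      simpa using P.act_mono s (sub_nonneg.2 hfg) x)
  calc P.act t f x = Real.exp (l * t) * (Real.exp (-l * t) * P.act t f x) := by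
        rw [← mul_assoc, ← Real.exp_add]; simp
    _ ≤ Real.exp (l * t) * f x := by
        rw [h.exp_mul_act_apply hl ht]
        gcongr
        linarith

end FellerSemigroup

/-! ### Time averages and invariant measures -/

open scoped BoundedContinuousFunction

lemma measurable_coe_of_continuous_probabilityMeasure {X Y : Type*} [TopologicalSpace X]
    [HasOuterApproxClosed X] [MeasurableSpace X] [BorelSpace X] [TopologicalSpace Y]
    [MeasurableSpace Y] [OpensMeasurableSpace Y] {μ : Y → ProbabilityMeasure X}
    (hμ : Continuous μ) : Measurable fun y => (μ y : Measure X) := by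
  refine Measurable.measure_of_isPiSystem_of_isProbabilityMeasure
    (BorelSpace.measurable_eq.trans borel_eq_generateFrom_isClosed) isPiSystem_isClosed
    fun F hF => ?_
  refine measurable_of_tendsto_metrizable (f := fun n y => ∫⁻ x, hF.apprSeq n x ∂(μ y : Measure X))
    (fun n => ?_) (tendsto_pi_nhds.2 fun y => HasOuterApproxClosed.tendsto_lintegral_apprSeq hF _)
  have hcont : Continuous fun y => (μ y).toFiniteMeasure.testAgainstNN (hF.apprSeq n) :=
    (ProbabilityMeasure.continuous_testAgainstNN_eval _).comp hμ
  convert hcont.measurable.coe_nnreal_ennreal with y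
  exact (FiniteMeasure.testAgainstNN_coe_eq (μ := (μ y).toFiniteMeasure)).symm

lemma integral_bind_kernel {X Y : Type*} [MeasurableSpace X] [MeasurableSpace Y] (κ : Kernel X Y)
    [IsSFiniteKernel κ] (μ : Measure X) [SFinite μ] {f : Y → ℝ} (hf : Integrable f (μ.bind κ)) :
    ∫ y, f y ∂μ.bind κ = ∫ x, ∫ y, f y ∂κ x ∂μ := by
  rw [Measure.comp_eq_comp_const_apply] at hf ⊢
  rw [Kernel.integral_comp hf, Kernel.const_apply]

namespace FellerSemigroup

variable {X : Type*} [TopologicalSpace X] [CompactSpace X] [MeasurableSpace X]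
  [BorelSpace X] (P : FellerSemigroup X)

/-- The law at time `t` of the process started from `x`, where `t < 0` is read as `0`. -/
def law (x : X) (t : ℝ) : ProbabilityMeasure X := ⟨P.kernel t.toNNReal x, inferInstance⟩

lemma continuous_law (x : X) : Continuous (P.law x) :=
  continuous_iff_continuousAt.2 fun t => ProbabilityMeasure.tendsto_iff_forall_integral_tendsto.2
    fun f => (P.continuous_act_apply f.toContinuousMap x).tendsto t

variable [HasOuterApproxClosed X]

lemma measurable_law_mul (x : X) (T : ℝ) :
    Measurable fun s : ℝ => (P.law x (T * s) : Measure X) :=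
  measurable_coe_of_continuous_probabilityMeasure
    ((P.continuous_law x).comp (continuous_const_mul T))

/-- The law of the process started from `x` at a uniform random time in `[0, T]`. Writing the
random time as `T` times a uniform variable in `[0, 1]` makes this meaningful for all `T`. -/
def occupation (T : ℝ) (x : X) : ProbabilityMeasure X :=
  ⟨(volume.restrict (Set.Ioc (0 : ℝ) 1)).bind fun s => P.law x (T * s),
    have : IsProbabilityMeasure (volume.restrict (Set.Ioc (0 : ℝ) 1)) := ⟨by simp⟩
    isProbabilityMeasure_bind
      (P.measurable_law_mul x T).aemeasurable (.of_forall fun _ => inferInstance)⟩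

lemma integral_occupation {T : ℝ} (hT : 0 < T) (x : X) (f : C(X, ℝ)) :
    ∫ y, f y ∂(P.occupation T x : Measure X) = T⁻¹ * ∫ s in (0 : ℝ)..T, P.act s f x := by
  let κ : Kernel ℝ X := ⟨fun s => P.law x (T * s), P.measurable_law_mul x T⟩
  have : IsMarkovKernel κ :=
    ⟨fun s => inferInstanceAs (IsProbabilityMeasure (P.law x (T * s) : Measure X))⟩
  calc ∫ y, f y ∂(P.occupation T x : Measure X)
      = ∫ s in Set.Ioc (0 : ℝ) 1, P.act (T * s) f x :=
        integral_bind_kernel κ _ (integrable_continuousMap f (P.occupation T x : Measure X))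
    _ = T⁻¹ * ∫ s in (0 : ℝ)..T, P.act s f x := by
        rw [← intervalIntegral.integral_of_le zero_le_one,
          intervalIntegral.integral_comp_mul_left (fun s => P.act s f x) hT.ne']
        simp

lemma abs_integral_occupation_act_sub_le {T t : ℝ} (hT : 0 < T) (ht : 0 ≤ t) (x : X)
    (f : C(X, ℝ)) :
    |∫ y, P.act t f y ∂(P.occupation T x : Measure X) - ∫ y, f y ∂(P.occupation T x : Measure X)| ≤
      2 * t * ‖f‖ / T := by
  have hint : ∀ a b, IntervalIntegrable (fun s => P.act s f x) volume a b := fun a b =>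
    (P.continuous_act_apply f x).intervalIntegrable a b
  have hbound : ∀ a, |∫ s in a..a + t, P.act s f x| ≤ ‖f‖ * t := fun a => by
    simpa [abs_of_nonneg ht] using intervalIntegral.norm_integral_le_of_norm_le_const (a := a)
      (b := a + t) fun s _ => P.norm_act_apply_le s f x
  have hshift : ∫ s in (0 : ℝ)..T, P.act s (P.act t f) x = ∫ s in t..T + t, P.act s f x := by
    rw [show ∫ s in t..T + t, P.act s f x = ∫ s in (0 : ℝ)..T, P.act (s + t) f x by
      rw [intervalIntegral.integral_comp_add_right fun s => P.act s f x, zero_add]]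
    refine intervalIntegral.integral_congr fun s hs => ?_
    rw [Set.uIcc_of_le hT.le] at hs
    simp [P.act_add hs.1 ht]
  have hsplit : (∫ s in t..T + t, P.act s f x) - ∫ s in (0 : ℝ)..T, P.act s f x =
      (∫ s in T..T + t, P.act s f x) - ∫ s in (0 : ℝ)..0 + t, P.act s f x := by
    rw [zero_add, intervalIntegral.integral_interval_sub_interval_comm' (hint _ _) (hint _ _)
      (hint _ _)]
  rw [P.integral_occupation hT, P.integral_occupation hT, ← mul_sub, hshift, hsplit, abs_mul,
    abs_of_pos (inv_pos.2 hT), inv_mul_eq_div]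
  gcongr
  linarith [abs_sub (∫ s in T..T + t, P.act s f x) (∫ s in (0 : ℝ)..0 + t, P.act s f x),
    hbound 0, hbound T]

lemma invariant_of_tendsto_occupation {ι : Type*} {l : Filter ι} [l.NeBot] {T : ι → ℝ}
    {x : ι → X} {μ : ProbabilityMeasure X} (hT : Tendsto T l atTop)
    (hμ : Tendsto (fun i => P.occupation (T i) (x i)) l (𝓝 μ)) (t : ℝ≥0) :
    (P.kernel t).Invariant (μ : Measure X) := by
  have htend : ∀ g : C(X, ℝ), Tendsto (fun i => ∫ y, g y ∂(P.occupation (T i) (x i) : Measure X)) l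
      (𝓝 (∫ y, g y ∂(μ : Measure X))) := fun g =>
    ProbabilityMeasure.tendsto_iff_forall_integral_tendsto.1 hμ (.mkOfCompact g)
  refine ext_of_forall_integral_eq_of_IsFiniteMeasure fun f => ?_
  let g : C(X, ℝ) := f.toContinuousMap
  have hdiff : Tendsto (fun i => ∫ y, P.act t g y ∂(P.occupation (T i) (x i) : Measure X) -
      ∫ y, g y ∂(P.occupation (T i) (x i) : Measure X)) l (𝓝 0) := by
    refine squeeze_zero_norm' ?_ (hT.const_div_atTop (2 * t * ‖g‖))
    filter_upwards [hT.eventually_gt_atTop 0] with i hi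
    exact P.abs_integral_occupation_act_sub_le hi t.2 (x i) g
  calc ∫ y, f y ∂(P.kernel t ∘ₘ (μ : Measure X)) = ∫ y, P.act t g y ∂(μ : Measure X) := by
        simpa [act_apply, g] using
          integral_bind_kernel (P.kernel t) (μ : Measure X) (integrable_continuousMap g _)
    _ = ∫ y, f y ∂(μ : Measure X) :=
        sub_eq_zero.1 (tendsto_nhds_unique ((htend _).sub (htend _)) hdiff)

/-- **Unique ergodicity**. Along every ultrafilter of pairs `(T, x)` with `T → ∞` the occupation
laws converge, by compactness, to an invariant measure. -/
theorem tendstoUniformly_timeAverage [T2Space X] {f : C(X, ℝ)} {c : ℝ}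
    (h : ∀ μ : Measure X, IsProbabilityMeasure μ → (∀ t, (P.kernel t).Invariant μ) →
      ∫ y, f y ∂μ = c) :
    TendstoUniformly (fun T x => T⁻¹ * ∫ s in (0 : ℝ)..T, P.act s f x) (fun _ => c) atTop := by
  suffices Tendsto (fun q : ℝ × X => q.1⁻¹ * ∫ s in (0 : ℝ)..q.1, P.act s f q.2)
      (atTop ×ˢ ⊤) (𝓝 c) from
    tendstoUniformly_iff_tendsto.2 (tendsto_left_nhds_uniformity.comp this)
  refine (tendsto_iff_ultrafilter _ _ _).2 fun 𝒰 h𝒰 => ?_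
  have hT : Tendsto Prod.fst (𝒰 : Filter (ℝ × X)) atTop := tendsto_fst.mono_left h𝒰
  let μ : ProbabilityMeasure X := (𝒰.map fun q => P.occupation q.1 q.2).lim
  have hμ : Tendsto (fun q : ℝ × X => P.occupation q.1 q.2) 𝒰 (𝓝 μ) := Ultrafilter.le_nhds_lim _
  rw [← h μ inferInstance (P.invariant_of_tendsto_occupation hT hμ)]
  refine (ProbabilityMeasure.tendsto_iff_forall_integral_tendsto.1 hμ (.mkOfCompact f)).congr' ?_
  filter_upwards [hT.eventually_gt_atTop 0] with q hq
  exact P.integral_occupation hq q.2 f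

end FellerSemigroup

/-! ### The East generator on cylinder functions -/

lemma continuous_flipAt (x : ℤ) : Continuous fun ω => flipAt ω x :=
  continuous_pi fun y => by
    unfold flipAt
    split_ifs
    · exact (continuous_of_discreteTopology (f := not)).comp (continuous_apply x)
    · exact continuous_apply y

lemma continuous_shift (y : ℤ) : Continuous (shift y) :=
  continuous_pi fun x => by
    unfold shift
    fun_prop

namespace IsCylinder

variable {f : Config → ℝ}

lemma continuous (hf : IsCylinder f) : Continuous f := by
  obtain ⟨S, hS⟩ := hf
  refine IsLocallyConstant.continuous (IsLocallyConstant.iff_eventually_eq f |>.2 fun ω => ?_)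
  have hagree : ∀ᶠ ω' in 𝓝 ω, ∀ x ∈ S, ω' x = ω x :=
    (eventually_all_finset S).2 fun x _ => by
      simpa [nhds_discrete] using (continuous_apply x).tendsto ω
  filter_upwards [hagree] with ω' h using hS _ _ h

lemma exists_eastGen_eq_sum (hf : IsCylinder f) (p : ℝ) :
    ∃ S : Finset ℤ, eastGen p f = fun ω => ∑ x ∈ S, (if ω (x + 1) = false then (1 : ℝ) else 0) *
      (if ω x = false then p else 1 - p) * (f (flipAt ω x) - f ω) := by
  obtain ⟨S, hS⟩ := hf
  refine ⟨S, funext fun ω => tsum_eq_sum fun x hx => ?_⟩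
  have hflip : f (flipAt ω x) = f ω :=
    hS _ _ fun y hy => if_neg (ne_of_mem_of_not_mem hy hx)
  rw [hflip, sub_self, mul_zero]

lemma continuous_eastGen (hf : IsCylinder f) (p : ℝ) : Continuous (eastGen p f) := by
  obtain ⟨S, hS⟩ := hf.exists_eastGen_eq_sum p
  have hcoord : ∀ (g : Bool → ℝ) (x : ℤ), Continuous fun ω : Config => g (ω x) := fun g x =>
    continuous_of_discreteTopology.comp (continuous_apply x)
  rw [hS]
  exact continuous_finsetSum _ fun x _ =>
    ((hcoord (fun b => if b = false then 1 else 0) (x + 1)).mul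
      (hcoord (fun b => if b = false then p else 1 - p) x)).mul
      ((hf.continuous.comp (continuous_flipAt x)).sub hf.continuous)

end IsCylinder

namespace EastProcess

variable (E : EastProcess)

instance (t : ℝ) : IsMarkovKernel (E.P t) := E.markov t

/-- The East process as a Feller semigroup on the compact space `{0, 1}^ℤ`. -/
def fellerSemigroup : FellerSemigroup Config where
  kernel t := E.P t
  isMarkovKernel t := E.markov t
  kernel_zero := E.P0
  kernel_add s t := E.semigroup t s t.2 s.2
  continuous_integral t f := E.feller t t.2 f f.continuous
  continuous_time f ω := (E.timeCont f f.continuous ω).comp NNReal.continuous_coe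

lemma fellerSemigroup_act_apply {t : ℝ} (ht : 0 ≤ t) (f : C(Config, ℝ)) (ω : Config) :
    E.fellerSemigroup.act t f ω = ∫ η, f η ∂E.P t ω := by
  rw [FellerSemigroup.act_apply, ← Real.coe_toNNReal t ht, Real.toNNReal_coe]
  rfl

lemma hasGenerator {f : Config → ℝ} (hf : IsCylinder f) :
    E.fellerSemigroup.HasGenerator ⟨f, hf.continuous⟩ ⟨eastGen E.p f, hf.continuous_eastGen E.p⟩ :=
  fun ω => (E.generator f hf ω).congr_of_mem
    (fun _ ht => E.fellerSemigroup_act_apply ht _ ω) Set.self_mem_Ici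

end EastProcess

/-! ### The front -/

section Front

variable {ω : Config} {m x : ℤ}

lemma front_eq (h0 : ω m = false) (h1 : ∀ x < m, ω x = true) : front ω = m :=
  IsLeast.csInf_eq ⟨h0, fun x hx => not_lt.1 fun hlt => by simp_all⟩

lemma mem_LO_of_forall_lt (h0 : ω m = false) (h1 : ∀ x < m, ω x = true) : ω ∈ LO :=
  ⟨⟨m, h1⟩, m, h0⟩

lemma isLeast_front (h : ω ∈ LO) : IsLeast {x | ω x = false} (front ω) := by
  obtain ⟨⟨y, hy⟩, hne⟩ := h
  have hbdd : BddBelow {x | ω x = false} := ⟨y, fun x hx => not_lt.1 fun hlt => by simp_all⟩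
  exact ⟨Int.csInf_mem hne hbdd, fun x hx => csInf_le hbdd hx⟩

lemma apply_front (h : ω ∈ LO) : ω (front ω) = false := (isLeast_front h).1

lemma apply_of_lt_front (h : ω ∈ LO) (hx : x < front ω) : ω x = true := by
  by_contra hfalse
  exact hx.not_ge ((isLeast_front h).2 (by simpa using hfalse))

lemma mem_LO_and_front_eq_iff :
    ω ∈ LO ∧ front ω = m ↔ ω m = false ∧ ∀ x < m, ω x = true := by
  constructor
  · rintro ⟨h, rfl⟩
    exact ⟨apply_front h, fun x => apply_of_lt_front h⟩
  · rintro ⟨h0, h1⟩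
    exact ⟨mem_LO_of_forall_lt h0 h1, front_eq h0 h1⟩

lemma front_of_notMem_LO (h : ω ∉ LO) : front ω = 0 := by
  by_cases hne : {x | ω x = false}.Nonempty
  · refine Int.csInf_of_not_bddBelow fun ⟨y, hy⟩ => h ⟨⟨y, fun x hx => ?_⟩, hne⟩
    by_contra hfalse
    exact hx.not_ge (hy (by simpa using hfalse))
  · rw [front, Set.not_nonempty_iff_eq_empty.1 hne, Int.csInf_empty]

lemma measurableSet_apply_eq (x : ℤ) (b : Bool) : MeasurableSet {ω : Config | ω x = b} :=
  measurableSet_eq_fun (measurable_pi_apply x) measurable_const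

lemma measurableSet_mem_LO_and_front_eq (m : ℤ) : MeasurableSet {ω | ω ∈ LO ∧ front ω = m} := by
  have hset : {ω | ω ∈ LO ∧ front ω = m} =
      {ω | ω m = false} ∩ ⋂ x ∈ Set.Iio m, {ω | ω x = true} := by
    ext
    simp [mem_LO_and_front_eq_iff]
  rw [hset]
  exact (measurableSet_apply_eq m false).inter
    (.biInter (Set.to_countable _) fun x _ => measurableSet_apply_eq x true)

lemma measurableSet_LO : MeasurableSet LO := by
  convert MeasurableSet.iUnion measurableSet_mem_LO_and_front_eq
  ext; simp

lemma measurable_front : Measurable front := by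
  refine measurable_to_countable' fun m => ?_
  have hsplit : front ⁻¹' {m} = {ω | ω ∈ LO ∧ front ω = m} ∪ LOᶜ ∩ {_ω | m = 0} := by
    ext ω
    by_cases h : ω ∈ LO <;> simp [h, front_of_notMem_LO, eq_comm]
  rw [hsplit]
  exact (measurableSet_mem_LO_and_front_eq m).union (measurableSet_LO.compl.inter (.const _))

@[fun_prop]
lemma measurable_coe_front : Measurable fun ω => (front ω : ℝ) :=
  (measurable_of_countable _).comp measurable_front

lemma flipAt_apply_of_ne {y : ℤ} (h : y ≠ x) : flipAt ω x y = ω y := if_neg h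

lemma flipAt_apply_self : flipAt ω x x = !ω x := if_pos rfl

lemma front_flipAt_front (h : ω ∈ LO) (h1 : ω (front ω + 1) = false) :
    front (flipAt ω (front ω)) = front ω + 1 := by
  refine front_eq (by rwa [flipAt_apply_of_ne (by lia)]) fun x hx => ?_
  obtain hlt | rfl := (Int.lt_add_one_iff.1 hx).lt_or_eq
  · rw [flipAt_apply_of_ne hlt.ne, apply_of_lt_front h hlt]
  · rw [flipAt_apply_self, apply_front h, Bool.not_false]

lemma front_flipAt_front_sub_one (h : ω ∈ LO) :
    front (flipAt ω (front ω - 1)) = front ω - 1 := by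
  refine front_eq (by rw [flipAt_apply_self, apply_of_lt_front h (by lia), Bool.not_true])
    fun x hx => ?_
  rw [flipAt_apply_of_ne hx.ne, apply_of_lt_front h (by lia)]

lemma front_flipAt_of_front_lt (h : ω ∈ LO) (hx : front ω < x) :
    front (flipAt ω x) = front ω :=
  front_eq (by rw [flipAt_apply_of_ne hx.ne, apply_front h]) fun y hy => by
    rw [flipAt_apply_of_ne (hy.trans hx).ne, apply_of_lt_front h hy]

lemma mem_LO_and_front_shift (h : ω ∈ LO) (y : ℤ) :
    shift y ω ∈ LO ∧ front (shift y ω) = front ω - y :=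
  mem_LO_and_front_eq_iff.2 ⟨by simpa [shift] using apply_front h,
    fun x hx => show ω (x + y) = true from apply_of_lt_front h (by lia)⟩

end Front

/-! ### The truncated front -/

section Truncation

variable {N : ℕ} {ω : Config} {x : ℤ}

/-- The configuration `ω`, made occupied to the left of `-N` and empty to the right of `N`. -/
def clamp (N : ℕ) (ω : Config) : Config := fun x =>
  if x < -N then true else if N < x then false else ω x

/-- The front of the configuration clamped to `[-N, N]`: a local approximation of `front`. -/
def truncFront (N : ℕ) (ω : Config) : ℤ := front (clamp N ω)

lemma clamp_apply_of_abs_le (hx : |x| ≤ N) : clamp N ω x = ω x := by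
  rw [abs_le] at hx
  rw [clamp, if_neg (by lia), if_neg (by lia)]

lemma clamp_apply_of_lt (hx : x < -N) : clamp N ω x = true := if_pos hx

lemma clamp_apply_of_gt (hx : N < x) : clamp N ω x = false := by
  rw [clamp, if_neg (by lia), if_pos hx]

lemma clamp_mem_LO (N : ℕ) (ω : Config) : clamp N ω ∈ LO :=
  ⟨⟨-N, fun _ => clamp_apply_of_lt⟩, N + 1, clamp_apply_of_gt (by lia)⟩

lemma clamp_flipAt_of_abs_le (hx : |x| ≤ N) : clamp N (flipAt ω x) = flipAt (clamp N ω) x := by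
  ext y
  rw [abs_le] at hx
  grind [clamp, flipAt]

lemma clamp_flipAt_of_lt_abs (hx : N < |x|) : clamp N (flipAt ω x) = clamp N ω := by
  ext y
  rw [lt_abs] at hx
  grind [clamp, flipAt]

lemma truncFront_flipAt_of_lt_abs (hx : N < |x|) : truncFront N (flipAt ω x) = truncFront N ω :=
  congrArg front (clamp_flipAt_of_lt_abs hx)

lemma neg_le_truncFront (N : ℕ) (ω : Config) : -N ≤ truncFront N ω := by
  by_contra! hlt
  have hfront : clamp N ω (truncFront N ω) = false := apply_front (clamp_mem_LO N ω)
  simp [clamp_apply_of_lt hlt] at hfront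

lemma truncFront_le (N : ℕ) (ω : Config) : truncFront N ω ≤ N + 1 := by
  by_contra! hlt
  have hfront : clamp N ω (N + 1) = true := apply_of_lt_front (clamp_mem_LO N ω) hlt
  simp [clamp_apply_of_gt] at hfront

lemma truncFront_eq_front (h : ω ∈ LO) (hN : |front ω| ≤ N) : truncFront N ω = front ω := by
  refine front_eq (by rw [clamp_apply_of_abs_le hN, apply_front h]) fun x hx => ?_
  by_cases hxN : x < -N
  · exact clamp_apply_of_lt hxN
  · rw [abs_le] at hN
    rw [clamp_apply_of_abs_le (abs_le.2 (by lia)), apply_of_lt_front h hx]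

lemma eventually_truncFront_eq_front (h : ω ∈ LO) :
    ∀ᶠ N : ℕ in atTop, truncFront N ω = front ω := by
  filter_upwards [eventually_ge_atTop (front ω).natAbs] with N hN
  exact truncFront_eq_front h (by grind)

lemma abs_truncFront_le (h : ω ∈ LO) : |truncFront N ω| ≤ |front ω| := by
  by_cases hN : |front ω| ≤ N
  · rw [truncFront_eq_front h hN]
  · have := neg_le_truncFront N ω
    have := truncFront_le N ω
    grind

lemma isCylinder_comp_truncFront (N : ℕ) (F : ℤ → ℝ) : IsCylinder fun ω => F (truncFront N ω) := by
  refine ⟨Finset.Icc (-N) N, fun ω ω' h => ?_⟩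
  have hclamp : clamp N ω = clamp N ω' := by
    ext x
    unfold clamp
    split_ifs with h1 h2
    · rfl
    · rfl
    · exact h x (by simp; lia)
  simp only [truncFront, hclamp]

lemma continuous_truncFront (N : ℕ) : Continuous (truncFront N) :=
  Int.isClosedEmbedding_coe_real.isInducing.continuous_iff.2
    (isCylinder_comp_truncFront N (↑)).continuous

lemma truncFront_flipAt_of_ne (hx : ω (x + 1) = false) (h1 : x ≠ truncFront N ω)
    (h2 : x ≠ truncFront N ω - 1) : truncFront N (flipAt ω x) = truncFront N ω := by
  by_cases hxN : |x| ≤ N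
  · rw [truncFront] at *
    rw [truncFront, clamp_flipAt_of_abs_le hxN]
    refine front_flipAt_of_front_lt (clamp_mem_LO N ω) ?_
    have hclamp : clamp N ω (x + 1) = false := by
      rw [abs_le] at hxN
      grind [clamp]
    have := (isLeast_front (clamp_mem_LO N ω)).2 hclamp
    lia
  · exact truncFront_flipAt_of_lt_abs (not_le.1 hxN)

lemma truncFront_flipAt_self (h1 : ω (truncFront N ω + 1) = false) (hN : truncFront N ω ≤ N) :
    truncFront N (flipAt ω (truncFront N ω)) = truncFront N ω + 1 := by
  have hlow := neg_le_truncFront N ω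
  rw [truncFront, clamp_flipAt_of_abs_le (abs_le.2 ⟨hlow, hN⟩)]
  refine front_flipAt_front (clamp_mem_LO N ω) ?_
  change clamp N ω (truncFront N ω + 1) = false
  grind [clamp]

lemma truncFront_flipAt_sub_one (hN : -N < truncFront N ω) :
    truncFront N (flipAt ω (truncFront N ω - 1)) = truncFront N ω - 1 := by
  have hupp := truncFront_le N ω
  rw [truncFront, clamp_flipAt_of_abs_le (abs_le.2 (by lia))]
  exact front_flipAt_front_sub_one (clamp_mem_LO N ω)

lemma apply_truncFront (hN : truncFront N ω ≤ N) : ω (truncFront N ω) = false :=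
  (clamp_apply_of_abs_le (abs_le.2 ⟨neg_le_truncFront N ω, hN⟩)).symm.trans
    (apply_front (clamp_mem_LO N ω))

lemma apply_truncFront_sub_one (hN : -N < truncFront N ω) : ω (truncFront N ω - 1) = true := by
  have hupp := truncFront_le N ω
  exact (clamp_apply_of_abs_le (abs_le.2 (by lia))).symm.trans
    (apply_of_lt_front (clamp_mem_LO N ω) (sub_one_lt _))

/-- The truncated front moves right at rate `p` when the next site is empty, and left at rate
`1 - p`, except that it is confined to `[-N, N + 1]`. -/
lemma eastGen_comp_truncFront (p : ℝ) (N : ℕ) (F : ℤ → ℝ) (ω : Config) {m : ℤ}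
    (hm : truncFront N ω = m) :
    eastGen p (fun ω => F (truncFront N ω)) ω =
      (if m ≤ N ∧ ω (m + 1) = false then p * (F (m + 1) - F m) else 0) +
      (if -N < m ∧ ω m = false then (1 - p) * (F (m - 1) - F m) else 0) := by
  have hoff : ∀ x ∉ ({m, m - 1} : Finset ℤ), (if ω (x + 1) = false then (1 : ℝ) else 0) *
      (if ω x = false then p else 1 - p) * (F (truncFront N (flipAt ω x)) - F (truncFront N ω)) =
      0 := fun x hx => by
    by_cases hx1 : ω (x + 1) = false
    · rw [truncFront_flipAt_of_ne hx1 (by grind) (by grind), sub_self, mul_zero]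
    · simp [hx1]
  rw [eastGen, tsum_eq_sum hoff, Finset.sum_pair (by lia), hm, sub_add_cancel]
  subst hm
  congr 1
  · by_cases hN : truncFront N ω ≤ N
    · by_cases h1 : ω (truncFront N ω + 1) = false
      · simp [hN, h1, apply_truncFront hN, truncFront_flipAt_self h1 hN]
      · simp [h1]
    · simp [hN, truncFront_flipAt_of_lt_abs (lt_abs.2 (.inl (not_le.1 hN)))]
  · by_cases hN : -N < truncFront N ω
    · simp [hN, apply_truncFront_sub_one hN, truncFront_flipAt_sub_one hN]
    · simp [hN, truncFront_flipAt_of_lt_abs (N := N) (x := truncFront N ω - 1) (by grind)]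

end Truncation

/-! ### Exponential moments of the displacement of the front -/

lemma abs_exp_sub_one_le_exp_abs_sub_one (x : ℝ) : |Real.exp x - 1| ≤ Real.exp |x| - 1 := by
  have h₁ := Real.add_one_le_exp x
  have h₂ := Real.add_one_le_exp (-x)
  refine abs_le.2 ⟨?_, sub_le_sub_right (Real.exp_le_exp.2 (le_abs_self x)) 1⟩
  obtain h | h := abs_cases x <;> rw [h.1] <;> linarith

lemma abs_exp_sub_exp_le {x y a : ℝ} (h : |x - y| ≤ a) :
    |Real.exp x - Real.exp y| ≤ (Real.exp a - 1) * Real.exp y :=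
  calc |Real.exp x - Real.exp y| = |Real.exp (x - y) - 1| * Real.exp y := by
        rw [← abs_of_pos (Real.exp_pos y), ← abs_mul, sub_mul, ← Real.exp_add, abs_of_pos
          (Real.exp_pos y), sub_add_cancel, one_mul]
    _ ≤ (Real.exp a - 1) * Real.exp y := by
        gcongr
        exact (abs_exp_sub_one_le_exp_abs_sub_one _).trans (by gcongr)

namespace EastProcess

variable (E : EastProcess) {ω : Config} {t : ℝ}

lemma ae_mem_LO (hω : ω ∈ LO) (ht : 0 ≤ t) : ∀ᵐ η ∂E.P t ω, η ∈ LO :=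
  (prob_compl_eq_zero_iff measurableSet_LO).2 (E.loStable t ht ω hω)

lemma integrable_comp_truncFront (F : ℤ → ℝ) (N : ℕ) (t : ℝ) (ω : Config) :
    Integrable (fun η => F (truncFront N η)) (E.P t ω) :=
  FellerSemigroup.integrable_continuousMap ⟨_, (isCylinder_comp_truncFront N F).continuous⟩ _

lemma integral_comp_truncFront_le {F : ℤ → ℝ} {k : ℝ} (hk : 0 < k) (hF : ∀ m, 0 ≤ F m)
    (hF' : ∀ m, |F (m + 1) - F m| ≤ k * F m ∧ |F (m - 1) - F m| ≤ k * F m) (N : ℕ)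
    (ht : 0 ≤ t) (ω : Config) :
    ∫ η, F (truncFront N η) ∂E.P t ω ≤ Real.exp (k * t) * F (truncFront N ω) := by
  have hgen : ∀ ω, eastGen E.p (fun ω => F (truncFront N ω)) ω ≤ k * F (truncFront N ω) := by
    intro ω
    have hp := E.hp0
    have hq := E.hp1
    obtain ⟨hright, hleft⟩ := hF' (truncFront N ω)
    rw [eastGen_comp_truncFront E.p N F ω rfl]
    calc _ ≤ E.p * (k * F (truncFront N ω)) + (1 - E.p) * (k * F (truncFront N ω)) := by
          have hnonneg := mul_nonneg hk.le (hF (truncFront N ω))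
          gcongr <;> split_ifs
          · exact mul_le_mul_of_nonneg_left ((le_abs_self _).trans hright) hp.le
          · positivity
          · exact mul_le_mul_of_nonneg_left ((le_abs_self _).trans hleft) (by linarith)
          · exact mul_nonneg (by linarith) hnonneg
      _ = k * F (truncFront N ω) := by ring
  have hgronwall := (E.hasGenerator (isCylinder_comp_truncFront N F)).act_apply_le hk hgen ht ω
  rwa [E.fellerSemigroup_act_apply ht] at hgronwall

lemma lintegral_comp_front_le {F : ℤ → ℝ} {k : ℝ} (hk : 0 < k) (hF : ∀ m, 0 ≤ F m)
    (hF' : ∀ m, |F (m + 1) - F m| ≤ k * F m ∧ |F (m - 1) - F m| ≤ k * F m)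
    (hω : ω ∈ LO) (ht : 0 ≤ t) :
    ∫⁻ η, ENNReal.ofReal (F (front η)) ∂E.P t ω ≤
      ENNReal.ofReal (Real.exp (k * t) * F (front ω)) := by
  have hbound : ∀ᶠ N : ℕ in atTop, ∫⁻ η, ENNReal.ofReal (F (truncFront N η)) ∂E.P t ω ≤
      ENNReal.ofReal (Real.exp (k * t) * F (front ω)) := by
    filter_upwards [eventually_truncFront_eq_front hω] with N hN
    rw [← ofReal_integral_eq_lintegral_ofReal (E.integrable_comp_truncFront F N t ω)
      (.of_forall fun _ => hF _), ← hN]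
    exact ENNReal.ofReal_le_ofReal (E.integral_comp_truncFront_le hk hF hF' N ht ω)
  calc ∫⁻ η, ENNReal.ofReal (F (front η)) ∂E.P t ω
      = ∫⁻ η, liminf (fun N : ℕ => ENNReal.ofReal (F (truncFront N η))) atTop ∂E.P t ω := by
        refine lintegral_congr_ae ?_
        filter_upwards [E.ae_mem_LO hω ht] with η hη
        refine (Tendsto.liminf_eq (tendsto_const_nhds.congr' ?_)).symm
        filter_upwards [eventually_truncFront_eq_front hη] with N hN
        rw [hN]
    _ ≤ liminf (fun N : ℕ => ∫⁻ η, ENNReal.ofReal (F (truncFront N η)) ∂E.P t ω) atTop :=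
        lintegral_liminf_le fun N =>
          (isCylinder_comp_truncFront N F).continuous.measurable.ennreal_ofReal
    _ ≤ _ := (liminf_le_liminf hbound).trans_eq (liminf_const _)

theorem lintegral_exp_abs_displacement_le {a : ℝ} (ha : 0 < a) (hω : ω ∈ LO) (ht : 0 ≤ t) :
    ∫⁻ η, ENNReal.ofReal (Real.exp (a * |(front η : ℝ) - front ω|)) ∂E.P t ω ≤
      ENNReal.ofReal (Real.exp ((Real.exp a - 1) * t)) := by
  have hstep : ∀ x y : ℝ, |x - y| ≤ 1 →
      |Real.exp (a * |x - front ω|) - Real.exp (a * |y - front ω|)| ≤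
        (Real.exp a - 1) * Real.exp (a * |y - front ω|) := fun x y hxy =>
    abs_exp_sub_exp_le <| by
      rw [← mul_sub, abs_mul, abs_of_pos ha]
      refine mul_le_of_le_one_right ha.le ((abs_abs_sub_abs_le _ _).trans ?_)
      rwa [sub_sub_sub_cancel_right]
  have hmoment := E.lintegral_comp_front_le (F := fun m => Real.exp (a * |(m : ℝ) - front ω|))
    (sub_pos.2 (Real.one_lt_exp_iff.2 ha)) (fun _ => (Real.exp_pos _).le)
    (fun m => ⟨hstep _ _ (by simp), hstep _ _ (by simp)⟩) hω ht
  simpa using hmoment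

lemma integrable_exp_abs_displacement {a : ℝ} (ha : 0 < a) (hω : ω ∈ LO) (ht : 0 ≤ t) :
    Integrable (fun η => Real.exp (a * |(front η : ℝ) - front ω|)) (E.P t ω) := by
  refine ⟨Measurable.aestronglyMeasurable (by fun_prop), ?_⟩
  rw [hasFiniteIntegral_iff_ofReal (.of_forall fun _ => (Real.exp_pos _).le)]
  exact (E.lintegral_exp_abs_displacement_le ha hω ht).trans_lt ENNReal.ofReal_lt_top

lemma integral_exp_abs_displacement_le {a : ℝ} (ha : 0 < a) (hω : ω ∈ LO) (ht : 0 ≤ t) :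
    ∫ η, Real.exp (a * |(front η : ℝ) - front ω|) ∂E.P t ω ≤
      Real.exp ((Real.exp a - 1) * t) := by
  rw [integral_eq_lintegral_of_nonneg_ae (.of_forall fun _ => (Real.exp_pos _).le)
    (E.integrable_exp_abs_displacement ha hω ht).aestronglyMeasurable]
  exact ENNReal.toReal_le_of_le_ofReal (Real.exp_pos _).le
    (E.lintegral_exp_abs_displacement_le ha hω ht)

lemma integrable_displacement (hω : ω ∈ LO) (ht : 0 ≤ t) :
    Integrable (fun η => (front η : ℝ) - front ω) (E.P t ω) :=
  (E.integrable_exp_abs_displacement one_pos hω ht).mono'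
    (Measurable.aestronglyMeasurable (by fun_prop)) <| .of_forall fun η => by
    rw [one_mul, Real.norm_eq_abs]
    linarith [Real.add_one_le_exp |(front η : ℝ) - front ω|]

lemma measureReal_lt_abs_displacement_le (r : ℝ) (hω : ω ∈ LO) (ht : 0 ≤ t) :
    (E.P t ω).real {η | r < |(front η : ℝ) - front ω|} ≤ Real.exp ((Real.exp 1 - 1) * t - r) := by
  have hmarkov := mul_meas_ge_le_integral_of_nonneg (μ := E.P t ω)
    (.of_forall fun η => (Real.exp_pos (1 * |(front η : ℝ) - front ω|)).le)
    (E.integrable_exp_abs_displacement one_pos hω ht) (Real.exp r)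
  rw [sub_eq_add_neg, Real.exp_add, Real.exp_neg, ← div_eq_mul_inv, le_div_iff₀' (Real.exp_pos r)]
  refine le_trans ?_ (hmarkov.trans (E.integral_exp_abs_displacement_le one_pos hω ht))
  gcongr with η
  · exact measure_ne_top _ _
  · intro hη
    simpa using hη.le

end EastProcess

/-! ### The process seen from the front -/

section FrontView

variable {ω : Config}

lemma mem_LO₀_iff : ω ∈ LO₀ ↔ ω 0 = false ∧ ∀ x < 0, ω x = true :=
  mem_LO_and_front_eq_iff

/-- The retraction of the configuration space onto `LO₀`. -/
def pin (ω : Config) : LO₀ :=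
  ⟨fun x => if x < 0 then true else if x = 0 then false else ω x,
    mem_LO₀_iff.2 ⟨by simp, fun x hx => if_pos hx⟩⟩

lemma pin_coe (η : LO₀) : pin η = η := by
  obtain ⟨h0, h1⟩ := mem_LO₀_iff.1 η.2
  ext x
  grind [pin]

lemma continuous_pin : Continuous pin :=
  Continuous.subtype_mk (continuous_pi fun x => by split_ifs <;> fun_prop) _

lemma isClosed_LO₀ : IsClosed LO₀ := by
  have hfixed : LO₀ = {ω | (pin ω : Config) = ω} :=
    Set.ext fun ω => ⟨fun h => congrArg Subtype.val (pin_coe ⟨ω, h⟩), fun h => h ▸ (pin ω).2⟩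
  rw [hfixed]
  exact isClosed_eq (continuous_subtype_val.comp continuous_pin) continuous_id

instance : CompactSpace LO₀ := isCompact_iff_compactSpace.1 isClosed_LO₀.isCompact

/-- The environment seen from the front: the map `θ` of the paper, with values in `LO₀`. -/
def frontView (ω : Config) : LO₀ := pin (shift (front ω) ω)

lemma coe_frontView (ω : Config) : (frontView ω : Config) = θL 0 ω := by
  ext x
  simp [frontView, pin, θL, shift, add_comm]

lemma frontView_shift (h : ω ∈ LO) (y : ℤ) : frontView (shift y ω) = frontView ω := by
  rw [frontView, (mem_LO_and_front_shift h y).2, frontView]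
  congr 1
  ext x
  exact congrArg ω (by lia)

lemma coe_frontView_of_mem_LO (h : ω ∈ LO) : (frontView ω : Config) = shift (front ω) ω := by
  obtain ⟨hLO, hfront⟩ := mem_LO_and_front_shift h (front ω)
  exact congrArg Subtype.val (pin_coe ⟨_, hLO, hfront.trans (sub_self _)⟩)

lemma frontView_coe (η : LO₀) : frontView η = η := by
  refine Subtype.ext ((coe_frontView_of_mem_LO η.2.1).trans ?_)
  rw [η.2.2]
  exact funext fun x => congrArg _ (add_zero x)

lemma continuous_pin_shift : Continuous fun q : ℤ × Config => pin (shift q.1 q.2) :=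
  continuous_pin.comp (continuous_prod_of_discrete_left.2 continuous_shift)

lemma measurable_frontView : Measurable frontView :=
  continuous_pin_shift.measurable.comp (measurable_front.prodMk measurable_id)

end FrontView

lemma continuous_of_abs_sub_le_mul {X : Type*} [TopologicalSpace X] {f C : X → ℝ}
    {F : ℕ → X → ℝ} {b : ℕ → ℝ} (hF : ∀ n, Continuous (F n)) (hb : Tendsto b atTop (𝓝 0))
    (hC : Continuous C) (h : ∀ n x, |f x - F n x| ≤ C x * b n) : Continuous f := by
  have hlim : TendstoLocallyUniformly F f atTop := by
    refine tendstoLocallyUniformly_iff_forall_tendsto.2 fun x => ?_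
    rw [tendsto_uniformity_iff_dist_tendsto_zero]
    refine squeeze_zero (fun _ => dist_nonneg) (fun y => h y.1 y.2) ?_
    simpa using ((hC.tendsto x).comp tendsto_snd).mul (hb.comp tendsto_fst)
  exact hlim.continuous (.of_forall hF)

lemma tendsto_exp_neg_natCast : Tendsto (fun n : ℕ => Real.exp (-n)) atTop (𝓝 0) :=
  Real.tendsto_exp_neg_atTop_nhds_zero.comp tendsto_natCast_atTop_atTop

namespace EastProcess

variable (E : EastProcess) {t : ℝ}

lemma map_frontView_frontView {ω : Config} (hω : ω ∈ LO) (ht : 0 ≤ t) :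
    (E.P t (frontView ω)).map frontView = (E.P t ω).map frontView := by
  rw [coe_frontView_of_mem_LO hω, E.shiftComm t ht,
    Measure.map_map measurable_frontView (continuous_shift _).measurable]
  refine Measure.map_congr ?_
  filter_upwards [E.ae_mem_LO hω ht] with η hη using frontView_shift hη _

/-- The transition kernel of the process seen from the front. -/
def frontKernel (t : ℝ) : Kernel LO₀ LO₀ :=
  ((E.P t).map frontView).comap Subtype.val measurable_subtype_coe

lemma frontKernel_apply (t : ℝ) (η : LO₀) : E.frontKernel t η = (E.P t η).map frontView := by
  rw [frontKernel, Kernel.comap_apply, Kernel.map_apply _ measurable_frontView]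

instance (t : ℝ) : IsMarkovKernel (E.frontKernel t) :=
  have := Kernel.IsMarkovKernel.map (E.P t) measurable_frontView
  inferInstanceAs (IsMarkovKernel (Kernel.comap ..))

lemma frontKernel_zero : E.frontKernel 0 = Kernel.id := by
  ext1 η
  rw [frontKernel_apply, E.P0, Kernel.id_apply, Measure.map_dirac' measurable_frontView,
    frontView_coe, Kernel.id_apply]

lemma map_frontView_comp {μ : Measure Config} (hμ : ∀ᵐ ω ∂μ, ω ∈ LO) (ht : 0 ≤ t) :
    (E.P t ∘ₘ μ).map frontView = E.frontKernel t ∘ₘ μ.map frontView := by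
  ext s hs
  rw [Measure.map_apply measurable_frontView hs,
    Measure.bind_apply (measurable_frontView hs) (Kernel.aemeasurable _),
    Measure.bind_apply hs (Kernel.aemeasurable _),
    lintegral_map (Kernel.measurable_coe _ hs) measurable_frontView]
  refine lintegral_congr_ae ?_
  filter_upwards [hμ] with ω hω
  rw [frontKernel_apply, E.map_frontView_frontView hω ht, Measure.map_apply measurable_frontView hs]

lemma frontKernel_add {s t : ℝ} (hs : 0 ≤ s) (ht : 0 ≤ t) :
    E.frontKernel (s + t) = E.frontKernel t ∘ₖ E.frontKernel s := by
  ext1 η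
  rw [Kernel.comp_apply, frontKernel_apply, frontKernel_apply, E.semigroup t s ht hs,
    Kernel.comp_apply, E.map_frontView_comp (E.ae_mem_LO η.2.1 hs) ht]

lemma integral_frontKernel (g : C(LO₀, ℝ)) (t : ℝ) (η : LO₀) :
    ∫ ζ, g ζ ∂E.frontKernel t η = ∫ ω, g (frontView ω) ∂E.P t η := by
  rw [frontKernel_apply, integral_map measurable_frontView.aemeasurable
    g.continuous.aestronglyMeasurable]

/-- The continuous approximation of `g ∘ frontView` that uses the truncated front. -/
def truncView (N : ℕ) (g : C(LO₀, ℝ)) : C(Config, ℝ) where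
  toFun ω := g (pin (shift (truncFront N ω) ω))
  continuous_toFun :=
    g.continuous.comp (continuous_pin_shift.comp ((continuous_truncFront N).prodMk continuous_id))

lemma abs_integral_frontView_sub_le (g : C(LO₀, ℝ)) (N : ℕ) (ht : 0 ≤ t) (η : LO₀) :
    |∫ ω, g (frontView ω) ∂E.P t η - ∫ ω, truncView N g ω ∂E.P t η| ≤
      2 * ‖g‖ * Real.exp ((Real.exp 1 - 1) * t) * Real.exp (-N) := by
  have hfront : Integrable (fun ω => g (frontView ω)) (E.P t η) :=
    .of_bound (g.continuous.measurable.comp measurable_frontView).aestronglyMeasurable ‖g‖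
      (.of_forall fun _ => g.norm_coe_le_norm _)
  have htrunc := FellerSemigroup.integrable_continuousMap (truncView N g) (E.P t η)
  let A : Set Config := {ω | (N : ℝ) < |(front ω : ℝ) - front η|}
  have hA : MeasurableSet A := measurableSet_lt measurable_const (by fun_prop)
  have hdiff : ∀ᵐ ω ∂E.P t η, ‖g (frontView ω) - truncView N g ω‖ ≤
      A.indicator (fun _ => 2 * ‖g‖) ω := by
    filter_upwards [E.ae_mem_LO η.2.1 ht] with ω hω
    by_cases hωA : ω ∈ A
    · rw [Set.indicator_of_mem hωA, two_mul]
      exact norm_sub_le_of_le (g.norm_coe_le_norm _) (g.norm_coe_le_norm _)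
    · have hle : |(front ω : ℝ)| ≤ N := by simpa [A, η.2.2] using hωA
      have hN : truncFront N ω = front ω := truncFront_eq_front hω (mod_cast hle)
      simp [truncView, hN, frontView, Set.indicator_of_notMem hωA]
  rw [← integral_sub hfront htrunc]
  calc _ ≤ ∫ ω, A.indicator (fun _ => 2 * ‖g‖) ω ∂E.P t η :=
        norm_integral_le_of_norm_le ((integrable_const _).indicator hA) hdiff
    _ = 2 * ‖g‖ * (E.P t η).real A := by
        rw [integral_indicator_const _ hA, smul_eq_mul, mul_comm]
    _ ≤ 2 * ‖g‖ * Real.exp ((Real.exp 1 - 1) * t - N) := by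
        gcongr
        exact E.measureReal_lt_abs_displacement_le N η.2.1 ht
    _ = _ := by rw [sub_eq_add_neg, Real.exp_add, ← mul_assoc]

/-- The process seen from the front is a Feller semigroup on the compact space `LO₀`. -/
def frontSemigroup : FellerSemigroup LO₀ where
  kernel t := E.frontKernel t
  isMarkovKernel t := inferInstance
  kernel_zero := E.frontKernel_zero
  kernel_add s t := E.frontKernel_add s.2 t.2
  continuous_integral t g := by
    simp only [integral_frontKernel]
    exact continuous_of_abs_sub_le_mul (F := fun N η => ∫ ω, truncView N g ω ∂E.P t η)
      (fun N => (E.feller t t.2 _ (truncView N g).continuous).comp continuous_subtype_val)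
      tendsto_exp_neg_natCast continuous_const
      fun N η => E.abs_integral_frontView_sub_le g N t.2 η
  continuous_time g η := by
    simp only [integral_frontKernel]
    exact continuous_of_abs_sub_le_mul (F := fun N t => ∫ ω, truncView N g ω ∂E.P t η)
      (fun N => (E.timeCont _ (truncView N g).continuous η).comp NNReal.continuous_coe)
      tendsto_exp_neg_natCast (by fun_prop)
      fun N t => E.abs_integral_frontView_sub_le g N t.2 η

lemma frontSemigroup_act_apply {t : ℝ} (ht : 0 ≤ t) (g : C(LO₀, ℝ)) (η : LO₀) :
    E.frontSemigroup.act t g η = ∫ ω, g (frontView ω) ∂E.P t η := by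
  rw [FellerSemigroup.act_apply, ← integral_frontKernel, ← Real.coe_toNNReal t ht,
    Real.toNNReal_coe]
  rfl

lemma frontSemigroup_act_frontView {t : ℝ} (ht : 0 ≤ t) (g : C(LO₀, ℝ)) {ω : Config}
    (hω : ω ∈ LO) : E.frontSemigroup.act t g (frontView ω) = ∫ η, g (frontView η) ∂E.P t ω := by
  have hg := g.continuous.aestronglyMeasurable (μ := (E.P t ω).map frontView)
  rw [E.frontSemigroup_act_apply ht, ← integral_map measurable_frontView.aemeasurable hg,
    ← E.map_frontView_frontView hω ht, integral_map measurable_frontView.aemeasurable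
      g.continuous.aestronglyMeasurable]

/-- The measure `ν` is a law on `LO₀` invariant for the process seen from the front. -/
structure IsFrontInvariant (ν : Measure Config) : Prop where
  isProbabilityMeasure : IsProbabilityMeasure ν
  apply_LO₀ : ν LO₀ = 1
  Qt_eq : ∀ t, 0 ≤ t → Qt E t ν = ν

lemma isFrontInvariant_map_val {m : Measure LO₀} [IsProbabilityMeasure m]
    (hm : ∀ t, (E.frontSemigroup.kernel t).Invariant m) : E.IsFrontInvariant (m.map (↑)) where
  isProbabilityMeasure := Measure.isProbabilityMeasure_map measurable_subtype_coe.aemeasurable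
  apply_LO₀ := by
    rw [Measure.map_apply measurable_subtype_coe isClosed_LO₀.measurableSet,
      Subtype.coe_preimage_self, measure_univ]
  Qt_eq t ht := by
    have hLO : ∀ᵐ ω ∂m.map ((↑) : LO₀ → Config), ω ∈ LO :=
      (ae_map_iff measurable_subtype_coe.aemeasurable measurableSet_LO).2
        (.of_forall fun η => η.2.1)
    have hview : (m.map ((↑) : LO₀ → Config)).map frontView = m := by
      rw [Measure.map_map measurable_frontView measurable_subtype_coe,
        show frontView ∘ Subtype.val = id from funext frontView_coe, Measure.map_id]
    calc Qt E t (m.map (↑)) = ((E.P t ∘ₘ m.map (↑)).map frontView).map (↑) := by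
          rw [Measure.map_map measurable_subtype_coe measurable_frontView, Qt]
          congr 1
          exact funext fun ω => (coe_frontView ω).symm
      _ = m.map (↑) := by
          rw [E.map_frontView_comp hLO ht, hview]
          exact congrArg _ (hm ⟨t, ht⟩)

end EastProcess

/-! ### The mean displacement of the front -/

namespace EastProcess

variable (E : EastProcess)

/-- The drift of the front as a function of the environment seen from it. -/
def drift : C(LO₀, ℝ) where
  toFun η := (if (η : Config) 1 = false then E.p else 0) - (1 - E.p)
  continuous_toFun := by
    have hcoord : Continuous fun η : LO₀ => (η : Config) 1 :=
      (continuous_apply (A := fun _ => Bool) 1).comp continuous_subtype_val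
    exact ((continuous_of_discreteTopology (f := fun b => if b = false then E.p else 0)).comp
      hcoord).sub continuous_const

/-- The speed `p ν(η₁ = 0) - q` of the front when the environment seen from it has law `ν`. -/
def frontSpeed (ν : Measure Config) : ℝ := E.p * ν.real {η | η 1 = false} - (1 - E.p)

lemma integral_drift (m : Measure LO₀) [IsProbabilityMeasure m] :
    ∫ η, E.drift η ∂m = E.frontSpeed (m.map (↑)) := by
  have hA : MeasurableSet {η : LO₀ | (η : Config) 1 = false} :=
    measurable_subtype_coe (measurableSet_apply_eq 1 false)
  have hdrift : ⇑E.drift = fun η =>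
      {η : LO₀ | (η : Config) 1 = false}.indicator (fun _ => E.p) η - (1 - E.p) := by
    ext η
    simp [drift, Set.indicator_apply]
  rw [hdrift, integral_sub ((integrable_const _).indicator hA) (integrable_const _),
    integral_indicator_const _ hA, integral_const, probReal_univ, one_smul, smul_eq_mul, mul_comm,
    frontSpeed, map_measureReal_apply measurable_subtype_coe (measurableSet_apply_eq 1 false)]
  rfl

lemma abs_eastGen_truncFront_le (N : ℕ) (ω : Config) :
    |eastGen E.p (fun ω => (truncFront N ω : ℝ)) ω| ≤ 1 := by
  have hp := E.hp0
  have hq := E.hp1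
  rw [eastGen_comp_truncFront E.p N (↑) ω rfl, abs_le]
  push_cast
  constructor <;> split_ifs <;> linarith

lemma tendsto_eastGen_truncFront {ω : Config} (hω : ω ∈ LO) :
    Tendsto (fun N : ℕ => eastGen E.p (fun ω => (truncFront N ω : ℝ)) ω) atTop
      (𝓝 (E.drift (frontView ω))) := by
  refine tendsto_const_nhds.congr' ?_
  filter_upwards [eventually_truncFront_eq_front hω, eventually_gt_atTop (front ω).natAbs]
    with N hN hlt
  have hview : (frontView ω : Config) 1 = ω (front ω + 1) := by
    rw [coe_frontView_of_mem_LO hω, shift, add_comm]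
  have h1 : front ω ≤ N := by lia
  have h2 : -N < front ω := by lia
  rw [eastGen_comp_truncFront E.p N (↑) ω hN]
  simp [drift, hview, h1, h2, apply_front hω]
  ring

lemma integral_truncFront (N : ℕ) {t : ℝ} (ht : 0 ≤ t) (ω : Config) :
    ∫ η, (truncFront N η : ℝ) ∂E.P t ω = truncFront N ω +
      ∫ s in (0 : ℝ)..t, ∫ η, eastGen E.p (fun ω => (truncFront N ω : ℝ)) η ∂E.P s ω := by
  have hdynkin := (E.hasGenerator (isCylinder_comp_truncFront N (↑))).act_apply ht ω
  rw [E.fellerSemigroup_act_apply ht] at hdynkin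
  refine hdynkin.trans (congrArg _ (intervalIntegral.integral_congr fun s hs => ?_))
  rw [Set.uIcc_of_le ht] at hs
  exact E.fellerSemigroup_act_apply hs.1 _ ω

lemma norm_integral_eastGen_truncFront_le (N : ℕ) (s : ℝ) (ω : Config) :
    ‖∫ η, eastGen E.p (fun ω => (truncFront N ω : ℝ)) η ∂E.P s ω‖ ≤ 1 :=
  (norm_integral_le_of_norm_le_const (.of_forall (E.abs_eastGen_truncFront_le N))).trans_eq
    (by simp)

lemma tendsto_integral_integral_eastGen_truncFront {ω : Config} (hω : ω ∈ LO) {t : ℝ} (ht : 0 ≤ t) :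
    Tendsto (fun N : ℕ =>
        ∫ s in (0 : ℝ)..t, ∫ η, eastGen E.p (fun ω => (truncFront N ω : ℝ)) η ∂E.P s ω) atTop
      (𝓝 (∫ s in (0 : ℝ)..t, E.frontSemigroup.act s E.drift (frontView ω))) := by
  have hcont (N : ℕ) : Continuous (eastGen E.p fun ω => (truncFront N ω : ℝ)) :=
    (isCylinder_comp_truncFront N (↑)).continuous_eastGen E.p
  refine intervalIntegral.tendsto_integral_filter_of_dominated_convergence (fun _ => 1)
    (.of_forall fun N => (E.timeCont _ (hcont N) ω).aestronglyMeasurable)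
    (.of_forall fun N => .of_forall fun s _ => E.norm_integral_eastGen_truncFront_le N s ω)
    intervalIntegrable_const (.of_forall fun s hs => ?_)
  rw [Set.uIoc_of_le ht] at hs
  rw [E.frontSemigroup_act_frontView hs.1.le E.drift hω]
  refine tendsto_integral_of_dominated_convergence (fun _ => 1)
    (fun N => (hcont N).aestronglyMeasurable) (integrable_const _)
    (fun N => .of_forall (E.abs_eastGen_truncFront_le N)) ?_
  filter_upwards [E.ae_mem_LO hω hs.1.le] with η hη using E.tendsto_eastGen_truncFront hη

lemma integrable_front {ω : Config} (hω : ω ∈ LO) {t : ℝ} (ht : 0 ≤ t) :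
    Integrable (fun η => (front η : ℝ)) (E.P t ω) := by
  simpa only [sub_eq_add_neg, integrable_add_const_iff] using E.integrable_displacement hω ht

lemma tendsto_integral_truncFront {ω : Config} (hω : ω ∈ LO) {t : ℝ} (ht : 0 ≤ t) :
    Tendsto (fun N : ℕ => ∫ η, (truncFront N η : ℝ) ∂E.P t ω) atTop
      (𝓝 (∫ η, (front η : ℝ) ∂E.P t ω)) := by
  refine tendsto_integral_of_dominated_convergence _
    (fun N => (E.integrable_comp_truncFront (↑) N t ω).aestronglyMeasurable)
    (E.integrable_front hω ht).abs ?_ ?_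
  · intro N
    filter_upwards [E.ae_mem_LO hω ht] with η hη
    rw [Real.norm_eq_abs]
    exact mod_cast abs_truncFront_le hη
  · filter_upwards [E.ae_mem_LO hω ht] with η hη
    refine tendsto_const_nhds.congr' ?_
    filter_upwards [eventually_truncFront_eq_front hη] with N hN
    rw [hN]

theorem integral_displacement {t : ℝ} (ht : 0 ≤ t) {ω : Config} (hω : ω ∈ LO) :
    ∫ η, ((front η : ℝ) - front ω) ∂E.P t ω =
      ∫ s in (0 : ℝ)..t, E.frontSemigroup.act s E.drift (frontView ω) := by
  have hstart : Tendsto (fun N : ℕ => (truncFront N ω : ℝ)) atTop (𝓝 (front ω)) := by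
    refine tendsto_const_nhds.congr' ?_
    filter_upwards [eventually_truncFront_eq_front hω] with N hN
    rw [hN]
  have hdynkin := tendsto_nhds_unique (E.tendsto_integral_truncFront hω ht)
    ((hstart.add (E.tendsto_integral_integral_eastGen_truncFront hω ht)).congr fun N =>
      (E.integral_truncFront N ht ω).symm)
  rw [integral_sub (E.integrable_front hω ht) (integrable_const _), hdynkin, integral_const,
    probReal_univ, one_smul, add_sub_cancel_left]

theorem eventually_abs_integral_displacement_sub_le {v : ℝ}
    (hv : ∀ ν, E.IsFrontInvariant ν → E.frontSpeed ν = v) {δ : ℝ} (hδ : 0 < δ) :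
    ∀ᶠ T in atTop, ∀ ω ∈ LO,
      |∫ η, ((front η : ℝ) - front ω) ∂E.P T ω - T * v| ≤ T * δ := by
  have hdrift : ∀ m : Measure LO₀, IsProbabilityMeasure m →
      (∀ t, (E.frontSemigroup.kernel t).Invariant m) → ∫ η, E.drift η ∂m = v := fun m _ hm =>
    (E.integral_drift m).trans (hv _ (E.isFrontInvariant_map_val hm))
  have hunif := Metric.tendstoUniformly_iff.1
    (E.frontSemigroup.tendstoUniformly_timeAverage hdrift) δ hδ
  filter_upwards [hunif, eventually_gt_atTop 0] with T hT hpos ω hω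
  rw [E.integral_displacement hpos.le hω, ← mul_inv_cancel_left₀ hpos.ne' (∫ s in _..T, _),
    ← mul_sub, abs_mul, abs_of_pos hpos, ← Real.dist_eq, dist_comm]
  exact mul_le_mul_of_nonneg_left (hT _).le hpos.le

end EastProcess

/-! ### Large deviations -/

lemma exp_mul_le_of_abs_le_one {a : ℝ} (ha : |a| ≤ 1) (y : ℝ) :
    Real.exp (a * y) ≤ 1 + a * y + 2 * a ^ 2 * Real.exp (2 * |y|) := by
  have hay : |a * y| ≤ |y| := by
    rw [abs_mul]
    exact mul_le_of_le_one_left (abs_nonneg y) ha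
  have hsq : y ^ 2 ≤ 2 * Real.exp |y| := by
    have := Real.quadratic_le_exp_of_nonneg (abs_nonneg y)
    have := abs_nonneg y
    rw [sq_abs] at *
    linarith
  have htaylor : |Real.exp (a * y) - (1 + a * y)| ≤ |a * y| ^ 2 * Real.exp |a * y| := by
    have hcomplex := Complex.norm_exp_sub_sum_le_norm_mul_exp ((a * y : ℝ) : ℂ) 2
    have hcast : Complex.exp ((a * y : ℝ) : ℂ) -
        ∑ m ∈ Finset.range 2, ((a * y : ℝ) : ℂ) ^ m / (m.factorial : ℂ) =
          ((Real.exp (a * y) - (1 + a * y) : ℝ) : ℂ) := by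
      simp [Finset.sum_range_succ]
    rwa [hcast, Complex.norm_real, Complex.norm_real, Real.norm_eq_abs, Real.norm_eq_abs]
      at hcomplex
  calc Real.exp (a * y) ≤ 1 + a * y + |a * y| ^ 2 * Real.exp |a * y| := by
        linarith [le_abs_self (Real.exp (a * y) - (1 + a * y))]
    _ ≤ 1 + a * y + a ^ 2 * (2 * Real.exp |y|) * Real.exp |y| := by
        rw [sq_abs, mul_pow]
        gcongr
    _ = 1 + a * y + 2 * a ^ 2 * Real.exp (2 * |y|) := by
        rw [two_mul |y|, Real.exp_add]
        ring

lemma lintegral_exp_mul_le {Ω : Type*} [MeasurableSpace Ω] {μ : Measure Ω} [IsProbabilityMeasure μ]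
    {Y : Ω → ℝ} {a : ℝ} (ha : |a| ≤ 1) (hY : Integrable Y μ)
    (hexp : Integrable (fun x => Real.exp (2 * |Y x|)) μ) :
    ∫⁻ x, ENNReal.ofReal (Real.exp (a * Y x)) ∂μ ≤
      ENNReal.ofReal (Real.exp (a * ∫ x, Y x ∂μ + 2 * a ^ 2 * ∫ x, Real.exp (2 * |Y x|) ∂μ)) := by
  have hlinear : Integrable (fun x => 1 + a * Y x) μ := (integrable_const 1).add (hY.const_mul a)
  have hsquare := hexp.const_mul (2 * a ^ 2)
  calc ∫⁻ x, ENNReal.ofReal (Real.exp (a * Y x)) ∂μ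
      ≤ ∫⁻ x, ENNReal.ofReal (1 + a * Y x + 2 * a ^ 2 * Real.exp (2 * |Y x|)) ∂μ := by
        gcongr with x
        exact exp_mul_le_of_abs_le_one ha _
    _ = ENNReal.ofReal (∫ x, (1 + a * Y x + 2 * a ^ 2 * Real.exp (2 * |Y x|)) ∂μ) :=
        (ofReal_integral_eq_lintegral_ofReal (hlinear.add hsquare) (.of_forall fun x =>
          (Real.exp_pos _).le.trans (exp_mul_le_of_abs_le_one ha _))).symm
    _ ≤ _ := by
        refine ENNReal.ofReal_le_ofReal ?_
        rw [integral_add hlinear hsquare, integral_add (integrable_const 1) (hY.const_mul a),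
          integral_const, probReal_univ, one_smul, integral_const_mul, integral_const_mul,
          add_assoc, add_comm]
        exact Real.add_one_le_exp _

open scoped ENNReal in
lemma le_mul_exp_of_submultiplicative {Z : ℝ → ℝ≥0∞}
    (hZ : ∀ s t, 0 ≤ s → 0 ≤ t → Z (s + t) ≤ Z s * Z t) {T b : ℝ} (hT : 0 < T)
    (hZT : Z T ≤ ENNReal.ofReal (Real.exp (b * T))) {K : ℝ≥0∞}
    (hK : ∀ r ∈ Set.Icc 0 T, Z r ≤ K * ENNReal.ofReal (Real.exp (b * r))) {t : ℝ} (ht : 0 ≤ t) :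
    Z t ≤ K * ENNReal.ofReal (Real.exp (b * t)) := by
  have hblocks : ∀ n : ℕ, ∀ r ∈ Set.Icc 0 T,
      Z (r + n * T) ≤ K * ENNReal.ofReal (Real.exp (b * (r + n * T))) := by
    intro n r hr
    induction n with
    | zero => simpa using hK r hr
    | succ n ih =>
      calc Z (r + (n + 1 : ℕ) * T) = Z (r + n * T + T) := by push_cast; ring_nf
        _ ≤ Z (r + n * T) * Z T := hZ _ _ (add_nonneg hr.1 (by positivity)) hT.le
        _ ≤ K * ENNReal.ofReal (Real.exp (b * (r + n * T))) *
              ENNReal.ofReal (Real.exp (b * T)) := by gcongr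
        _ = K * ENNReal.ofReal (Real.exp (b * (r + (n + 1 : ℕ) * T))) := by
            rw [mul_assoc, ← ENNReal.ofReal_mul (Real.exp_pos _).le, ← Real.exp_add]
            push_cast
            ring_nf
  have hfloor : (⌊t / T⌋₊ : ℝ) * T ≤ t := (le_div_iff₀ hT).1 (Nat.floor_le (by positivity))
  have hceil : t < (⌊t / T⌋₊ + 1) * T := (div_lt_iff₀ hT).1 (Nat.lt_floor_add_one _)
  simpa using hblocks ⌊t / T⌋₊ (t - ⌊t / T⌋₊ * T) ⟨by linarith, by linarith⟩

namespace EastProcess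

variable (E : EastProcess) {v : ℝ}

open scoped ENNReal in
/-- The moment generating function of the displacement of the front during a time `t`, in the worst
case over the initial configuration. -/
def frontMGF (a t : ℝ) : ℝ≥0∞ :=
  ⨆ ω ∈ LO, ∫⁻ η, ENNReal.ofReal (Real.exp (a * (front η - front ω))) ∂E.P t ω

lemma lintegral_exp_displacement_le_frontMGF {ω : Config} (hω : ω ∈ LO) (a t : ℝ) :
    ∫⁻ η, ENNReal.ofReal (Real.exp (a * (front η - front ω))) ∂E.P t ω ≤ E.frontMGF a t :=
  le_iSup₂ (f := fun ω (_ : ω ∈ LO) =>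
    ∫⁻ η, ENNReal.ofReal (Real.exp (a * (front η - front ω))) ∂E.P t ω) ω hω

lemma frontMGF_add_le (a : ℝ) {s t : ℝ} (hs : 0 ≤ s) (ht : 0 ≤ t) :
    E.frontMGF a (s + t) ≤ E.frontMGF a s * E.frontMGF a t := by
  refine iSup₂_le fun ω hω => ?_
  calc ∫⁻ η, ENNReal.ofReal (Real.exp (a * (front η - front ω))) ∂E.P (s + t) ω
      = ∫⁻ ζ, ∫⁻ η, ENNReal.ofReal (Real.exp (a * (front ζ - front ω))) *
          ENNReal.ofReal (Real.exp (a * (front η - front ζ))) ∂E.P t ζ ∂E.P s ω := by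
        rw [E.semigroup t s ht hs, Kernel.lintegral_comp _ _ _ (by fun_prop)]
        simp only [← ENNReal.ofReal_mul (Real.exp_pos _).le, ← Real.exp_add, ← mul_add,
          sub_add_sub_cancel']
    _ ≤ ∫⁻ ζ, ENNReal.ofReal (Real.exp (a * (front ζ - front ω))) * E.frontMGF a t ∂E.P s ω := by
        refine lintegral_mono_ae ?_
        filter_upwards [E.ae_mem_LO hω hs] with ζ hζ
        rw [lintegral_const_mul _ (by fun_prop)]
        gcongr
        exact E.lintegral_exp_displacement_le_frontMGF hζ a t
    _ ≤ E.frontMGF a s * E.frontMGF a t := by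
        rw [lintegral_mul_const _ (by fun_prop)]
        gcongr
        exact E.lintegral_exp_displacement_le_frontMGF hω a s

lemma frontMGF_le {a : ℝ} (ha : |a| ≤ 1) {t : ℝ} (ht : 0 ≤ t) :
    E.frontMGF a t ≤ ENNReal.ofReal (Real.exp ((Real.exp 1 - 1) * t)) := by
  refine iSup₂_le fun ω hω => ?_
  refine le_trans ?_ (E.lintegral_exp_abs_displacement_le one_pos hω ht)
  gcongr ∫⁻ η, ENNReal.ofReal (Real.exp ?_) ∂_
  rw [one_mul]
  exact (le_abs_self _).trans ((abs_mul _ _).trans_le (mul_le_of_le_one_left (abs_nonneg _) ha))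

lemma frontMGF_le_of_mul_integral_displacement_le {a b : ℝ} (ha : |a| ≤ 1) {t : ℝ} (ht : 0 ≤ t)
    (hb : ∀ ω ∈ LO, a * ∫ η, ((front η : ℝ) - front ω) ∂E.P t ω ≤ b) :
    E.frontMGF a t ≤
      ENNReal.ofReal (Real.exp (b + 2 * a ^ 2 * Real.exp ((Real.exp 2 - 1) * t))) := by
  refine iSup₂_le fun ω hω => ?_
  refine (lintegral_exp_mul_le ha (E.integrable_displacement hω ht)
    (E.integrable_exp_abs_displacement two_pos hω ht)).trans ?_
  gcongr
  · exact hb ω hω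
  · exact E.integral_exp_abs_displacement_le two_pos hω ht

lemma measure_le_mul_displacement_le {ω : Config} (hω : ω ∈ LO) (a r t : ℝ) :
    E.P t ω {η | r ≤ a * (front η - front ω)} ≤
      E.frontMGF a t * ENNReal.ofReal (Real.exp (-r)) := by
  have hchernoff := mul_meas_ge_le_lintegral (μ := E.P t ω)
    (f := fun η => ENNReal.ofReal (Real.exp (a * (front η - front ω)))) (by fun_prop)
    (ENNReal.ofReal (Real.exp r))
  rw [Real.exp_neg, ENNReal.ofReal_inv_of_pos (Real.exp_pos r), ← div_eq_mul_inv,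
    ENNReal.le_div_iff_mul_le (by simp [Real.exp_pos]) (by simp), mul_comm]
  simp only [ENNReal.ofReal_le_ofReal_iff (Real.exp_pos _).le, Real.exp_le_exp] at hchernoff
  exact hchernoff.trans (E.lintegral_exp_displacement_le_frontMGF hω a t)

open scoped ENNReal in
lemma exists_frontMGF_le (hv : ∀ ν, E.IsFrontInvariant ν → E.frontSpeed ν = v) {ε : ℝ}
    (hε : 0 < ε) : ∃ a > 0, ∃ K : ℝ≥0∞, K ≠ ∞ ∧ ∀ σ : ℝ, |σ| = a → ∀ t, 0 ≤ t →
      E.frontMGF σ t ≤ K * ENNReal.ofReal (Real.exp ((σ * v + a * ε) * t)) := by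
  obtain ⟨T, hmean, hT⟩ := ((E.eventually_abs_integral_displacement_sub_le hv (half_pos hε)).and
    (eventually_gt_atTop 0)).exists
  let M := Real.exp ((Real.exp 2 - 1) * T)
  let a := min 1 (T * ε / (4 * M))
  have ha : 0 < a := lt_min one_pos (by positivity)
  have haM : 2 * a * M ≤ T * ε / 2 := by
    have := (le_div_iff₀ (by positivity)).1 (min_le_right 1 (T * ε / (4 * M)))
    linarith
  refine ⟨a, ha, ENNReal.ofReal (Real.exp ((Real.exp 1 - 1 + a * |v|) * T)), ENNReal.ofReal_ne_top,
    fun σ hσ t ht => ?_⟩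
  have hσ1 : |σ| ≤ 1 := hσ.trans_le (min_le_left _ _)
  refine le_mul_exp_of_submultiplicative (fun s t => E.frontMGF_add_le σ) hT ?_ ?_ ht
  · refine (E.frontMGF_le_of_mul_integral_displacement_le (b := σ * (T * v) + a * (T * (ε / 2)))
      hσ1 hT.le fun ω hω => ?_).trans ?_
    · have := mul_le_mul_of_nonneg_left (hmean ω hω) ha.le
      rw [← hσ, ← abs_mul, hσ, mul_sub] at this
      linarith [le_of_abs_le this]
    · gcongr
      have := mul_le_mul_of_nonneg_left haM ha.le
      rw [← sq_abs, hσ]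
      linarith
  · intro r hr
    refine (E.frontMGF_le hσ1 hr.1).trans ?_
    rw [← ENNReal.ofReal_mul (Real.exp_pos _).le, ← Real.exp_add]
    have hlow : -(a * (|v| * r)) ≤ σ * v * r := by
      rw [← hσ, ← mul_assoc, ← abs_mul, ← neg_mul]
      exact mul_le_mul_of_nonneg_right (neg_abs_le _) hr.1
    have hupper : (Real.exp 1 - 1 + a * |v|) * r ≤ (Real.exp 1 - 1 + a * |v|) * T :=
      mul_le_mul_of_nonneg_left hr.2
        (add_nonneg (sub_nonneg.2 (Real.one_le_exp zero_le_one)) (by positivity))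
    have hεr : 0 ≤ a * ε * r := mul_nonneg (by positivity) hr.1
    gcongr
    linarith

open scoped ENNReal in
theorem exists_measure_abs_displacement_sub_le
    (hv : ∀ ν, E.IsFrontInvariant ν → E.frontSpeed ν = v) {ε : ℝ} (hε : 0 < ε) :
    ∃ c > 0, ∃ K : ℝ≥0∞, K ≠ ∞ ∧ ∀ ω ∈ LO, ∀ t, 0 ≤ t →
      E.P t ω {η | ε * t ≤ |(front η : ℝ) - front ω - v * t|} ≤
        K * ENNReal.ofReal (Real.exp (-c * t)) := by
  obtain ⟨a, ha, K, hK, hMGF⟩ := E.exists_frontMGF_le hv (half_pos hε)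
  refine ⟨a * (ε / 2), by positivity, K + K, by simp [hK], fun ω hω t ht => ?_⟩
  have htail : ∀ σ : ℝ, |σ| = a →
      E.P t ω {η | (σ * v + a * ε) * t ≤ σ * (front η - front ω)} ≤
        K * ENNReal.ofReal (Real.exp (-(a * (ε / 2)) * t)) := fun σ hσ =>
    calc _ ≤ E.frontMGF σ t * ENNReal.ofReal (Real.exp (-((σ * v + a * ε) * t))) :=
          E.measure_le_mul_displacement_le hω σ _ t
      _ ≤ K * ENNReal.ofReal (Real.exp ((σ * v + a * (ε / 2)) * t)) *
            ENNReal.ofReal (Real.exp (-((σ * v + a * ε) * t))) := by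
          gcongr
          exact hMGF σ hσ t ht
      _ = _ := by
          rw [mul_assoc, ← ENNReal.ofReal_mul (Real.exp_pos _).le, ← Real.exp_add]
          ring_nf
  rw [add_mul]
  refine le_trans (measure_mono fun η hη => ?_) ((measure_union_le _ _).trans
    (add_le_add (htail a (abs_of_pos ha)) (htail (-a) (by rw [abs_neg, abs_of_pos ha]))))
  obtain hpos | hneg := le_abs.1 (show ε * t ≤ |(front η : ℝ) - front ω - v * t| from hη)
  · exact .inl (by simp only [Set.mem_ofPred_eq]; nlinarith)
  · exact .inr (by simp only [Set.mem_ofPred_eq]; nlinarith)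

end EastProcess

theorem front_law_of_large_numbers_general (E : EastProcess) {v : ℝ}
    (hv : ∀ ν, E.IsFrontInvariant ν → E.frontSpeed ν = v) {ω : Config} (hω : ω ∈ LO) {ε : ℝ}
    (hε : 0 < ε) :
    Tendsto (fun t : ℝ => E.P t ω {η ∈ LO | ε < |(front η : ℝ) / t - v|}) atTop (𝓝 0) := by
  obtain ⟨c, hc, K, hK, htail⟩ := E.exists_measure_abs_displacement_sub_le hv (half_pos hε)
  have hlim : Tendsto (fun t => K * ENNReal.ofReal (Real.exp (-c * t))) atTop (𝓝 0) := by
    have hexp : Tendsto (fun t => Real.exp (-c * t)) atTop (𝓝 0) :=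
      Real.tendsto_exp_atBot.comp (tendsto_id.const_mul_atTop_of_neg (neg_lt_zero.2 hc))
    simpa using ENNReal.Tendsto.const_mul (ENNReal.tendsto_ofReal hexp) (.inr hK)
  refine tendsto_of_tendsto_of_tendsto_of_le_of_le' tendsto_const_nhds hlim
    (.of_forall fun _ => zero_le) ?_
  filter_upwards [eventually_gt_atTop 0, eventually_ge_atTop (|(front ω : ℝ)| / (ε / 2))]
    with t ht hfront
  refine le_trans (measure_mono fun η hη => ?_) (htail ω hω t ht.le)
  obtain ⟨-, hη⟩ := hη
  rw [div_le_iff₀' (half_pos hε)] at hfront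
  rw [div_sub' ht.ne', abs_div, abs_of_pos ht, lt_div_iff₀ ht, mul_comm t v] at hη
  have htriangle := abs_sub_abs_le_abs_sub ((front η : ℝ) - v * t) (front ω)
  rw [sub_right_comm] at htriangle
  exact (by linarith : ε / 2 * t ≤ |(front η : ℝ) - front ω - v * t|)

/-- **Law of large numbers for the front** (Theorem 6.1 of the paper): if `ν` is the
invariant measure of the process seen from the front and `v = p ν(1 − ω₁) − q`, then for
every `ω ∈ LO₀`, `X(ω(t))/t → v` in `P_ω`-probability as `t → ∞`. -/
theorem front_law_of_large_numbers (E : EastProcess) (hgap : 0 < gap E)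
    (ν : Measure Config) (hν : IsProbabilityMeasure ν) (hν0 : ν LO₀ = 1)
    (hinv : ∀ t : ℝ, 0 ≤ t → Qt E t ν = ν)
    (huniq : ∀ ν' : Measure Config, IsProbabilityMeasure ν' → ν' LO₀ = 1 →
      (∀ t : ℝ, 0 ≤ t → Qt E t ν' = ν') → ν' = ν) :
    ∀ ω ∈ LO₀, ∀ ε : ℝ, 0 < ε →
      Tendsto (fun t : ℝ =>
          E.P t ω {η ∈ LO |
            ε < |(front η : ℝ) / t -
              (E.p * (ν {η' : Config | η' 1 = false}).toReal - (1 - E.p))|})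
        atTop (𝓝 0) :=
  fun ω hω ε hε => front_law_of_large_numbers_general E (fun ν' h => by
    rw [huniq ν' h.isProbabilityMeasure h.apply_LO₀ h.Qt_eq]; rfl) hω.1 hε

end
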